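/- (Asymptotic profile.) Let (X,d) be a compact geodesic metric space and let H:X×ℝ→ℝ satisfy H(x,p)=H(x,|p|) and (A1)–(A4); set c := max_{x∈X} H(x,0) and A := {x∈X : H(x,0)=c}, assumed nonempty. Let u₀:X→ℝ be Lipschitz continuous and let u ∈ C([0,∞)×X) be a Lipschitz continuous metric viscosity solution of ∂ₜu + H(x,|Du|) = 0 in (0,∞)×X with u(0,·)=u₀. Define φ₋(x) := inf_{t≥0} (u(t,x)+ct), S(x,y) := sup{ w(x) : w∈C(X) a metric viscosity subsolution of H(·,|Dw|)=c in X with w(y)=0 }, and φ∞(x) := min{ S(x,y)+φ₋(y) : y∈A }. Then lim_{t→∞} (u(t,x)+ct) = φ∞(x) for all x ∈ X. -/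

import Mathlib

open Filter Metric Set Topology

noncomputable section

/-- A geodesic metric space: any two points are joined by a constant-speed geodesic. -/
def IsGeodesicSpace (X : Type*) [MetricSpace X] : Prop :=
  ∀ x y : X, ∃ f : ℝ → X, f 0 = x ∧ f 1 = y ∧
    ∀ s ∈ Set.Icc (0:ℝ) 1, ∀ t ∈ Set.Icc (0:ℝ) 1,
      dist (f s) (f t) = |s - t| * dist x y

variable {X : Type*} [MetricSpace X]

/-- Upper local mslope |∇⁺v|(x) = limsup_{y→x} [v(y)-v(x)]₊ / d(y,x). -/
def mslopeUp (v : X → ℝ) (x : X) : ℝ :=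
  Filter.limsup (fun y => max (v y - v x) 0 / dist y x) (𝓝[≠] x)

/-- Lower local mslope |∇⁻v|(x) = limsup_{y→x} [v(y)-v(x)]₋ / d(y,x). -/
def mslopeDown (v : X → ℝ) (x : X) : ℝ :=
  Filter.limsup (fun y => max (v x - v y) 0 / dist y x) (𝓝[≠] x)

/-- Local mslope |∇v|(x) = limsup_{y→x} |v(y)-v(x)| / d(y,x). -/
def mslope (v : X → ℝ) (x : X) : ℝ :=
  Filter.limsup (fun y => |v y - v x| / dist y x) (𝓝[≠] x)

/-- Spatial upper local mslope of a function of time and space. -/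
def slopeUpT (u : ℝ × X → ℝ) (z : ℝ × X) : ℝ := mslopeUp (fun y => u (z.1, y)) z.2

/-- Spatial lower local mslope of a function of time and space. -/
def slopeDownT (u : ℝ × X → ℝ) (z : ℝ × X) : ℝ := mslopeDown (fun y => u (z.1, y)) z.2

/-- Spatial local mslope of a function of time and space. -/
def slopeT (u : ℝ × X → ℝ) (z : ℝ × X) : ℝ := mslope (fun y => u (z.1, y)) z.2

/-- Time derivative ∂ₜu. -/
def timeDeriv (u : ℝ × X → ℝ) (z : ℝ × X) : ℝ := deriv (fun s => u (s, z.2)) z.1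

/-- Locally Lipschitz on a set. -/
def LocLipOn {α : Type*} [PseudoMetricSpace α] (s : Set α) (f : α → ℝ) : Prop :=
  ∀ z ∈ s, ∃ K : NNReal, ∃ t ∈ 𝓝[s] z, LipschitzOnWith K f t

/-- The class 𝒞(Q): locally Lipschitz with (existing) continuous time derivative. -/
def IsCQ (Q : Set (ℝ × X)) (u : ℝ × X → ℝ) : Prop :=
  LocLipOn Q u ∧
  (∀ z ∈ Q, DifferentiableAt ℝ (fun s : ℝ => u (s, z.2)) z.1) ∧
  ContinuousOn (timeDeriv u) Q

/-- The class C̲¹(Q). -/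
def IsC1UnderQ (Q : Set (ℝ × X)) (u : ℝ × X → ℝ) : Prop :=
  IsCQ Q u ∧ Set.EqOn (slopeDownT u) (slopeT u) Q ∧ ContinuousOn (slopeT u) Q

/-- The class C̄¹(Q). -/
def IsC1UpperQ (Q : Set (ℝ × X)) (u : ℝ × X → ℝ) : Prop :=
  IsCQ Q u ∧ Set.EqOn (slopeUpT u) (slopeT u) Q ∧ ContinuousOn (slopeT u) Q

/-- The class 𝒞(U) for stationary problems: locally Lipschitz functions. -/
def IsCU (U : Set X) (v : X → ℝ) : Prop := LocLipOn U v

/-- The class C̲¹(U). -/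
def IsC1UnderU (U : Set X) (v : X → ℝ) : Prop :=
  IsCU U v ∧ Set.EqOn (mslopeDown v) (mslope v) U ∧ ContinuousOn (mslope v) U

/-- The class C̄¹(U). -/
def IsC1UpperU (U : Set X) (v : X → ℝ) : Prop :=
  IsCU U v ∧ Set.EqOn (mslopeUp v) (mslope v) U ∧ ContinuousOn (mslope v) U

/-- F_r(z,p,q) = sup_{p'∈[-1,1]} F(z,p+rp',q) if r ≥ 0, inf if r ≤ 0. -/
def Fr (F : (ℝ × X) → ℝ → ℝ → ℝ) (r : ℝ) (z : ℝ × X) (p q : ℝ) : ℝ :=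
  if 0 ≤ r then sSup ((fun p' => F z (p + r * p') q) '' Set.Icc (-1:ℝ) 1)
  else sInf ((fun p' => F z (p + r * p') q) '' Set.Icc (-1:ℝ) 1)

/-- H_r(x,p) = sup_{p'∈[-1,1]} H(x,p+rp') if r ≥ 0, inf if r ≤ 0. -/
def Hr (H : X → ℝ → ℝ) (r : ℝ) (x : X) (p : ℝ) : ℝ :=
  if 0 ≤ r then sSup ((fun p' => H x (p + r * p')) '' Set.Icc (-1:ℝ) 1)
  else sInf ((fun p' => H x (p + r * p')) '' Set.Icc (-1:ℝ) 1)

/-- Upper semicontinuous envelope (relative to a set) of an extended-real function. -/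
def uscEnv {α : Type*} [TopologicalSpace α] (s : Set α) (u : α → EReal) (z : α) : EReal :=
  Filter.limsup u (𝓝[s] z)

/-- Lower semicontinuous envelope (relative to a set) of an extended-real function. -/
def lscEnv {α : Type*} [TopologicalSpace α] (s : Set α) (u : α → EReal) (z : α) : EReal :=
  Filter.liminf u (𝓝[s] z)

/-- Upper semicontinuous envelope (relative to a set) of a real function. -/
def uscEnvR {α : Type*} [TopologicalSpace α] (s : Set α) (f : α → ℝ) (z : α) : ℝ :=
  Filter.limsup f (𝓝[s] z)

/-- Metric viscosity subsolution of F(z,|Du|,∂ₜu)=0 in Q (Gangbo–Święch). -/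
def IsSubsol (Q : Set (ℝ × X)) (F : (ℝ × X) → ℝ → ℝ → ℝ) (u : ℝ × X → EReal) : Prop :=
  ∀ ψ₁ ψ₂ : ℝ × X → ℝ, IsC1UnderQ Q ψ₁ → IsCQ Q ψ₂ → ∀ z ∈ Q,
    (∃ R > 0, uscEnv Q u z = ((ψ₁ z + ψ₂ z : ℝ) : EReal) ∧
      ∀ w ∈ Metric.ball z R ∩ Q, uscEnv Q u w ≤ ((ψ₁ w + ψ₂ w : ℝ) : EReal)) →
    Fr F (-(uscEnvR Q (slopeT ψ₂) z)) z (slopeT ψ₁ z)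
      (timeDeriv (fun w => ψ₁ w + ψ₂ w) z) ≤ 0

/-- Metric viscosity supersolution of F(z,|Du|,∂ₜu)=0 in Q (Gangbo–Święch). -/
def IsSupersol (Q : Set (ℝ × X)) (F : (ℝ × X) → ℝ → ℝ → ℝ) (u : ℝ × X → EReal) : Prop :=
  ∀ ψ₁ ψ₂ : ℝ × X → ℝ, IsC1UpperQ Q ψ₁ → IsCQ Q ψ₂ → ∀ z ∈ Q,
    (∃ R > 0, lscEnv Q u z = ((ψ₁ z + ψ₂ z : ℝ) : EReal) ∧
      ∀ w ∈ Metric.ball z R ∩ Q, ((ψ₁ w + ψ₂ w : ℝ) : EReal) ≤ lscEnv Q u w) →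
    0 ≤ Fr F (uscEnvR Q (slopeT ψ₂) z) z (slopeT ψ₁ z)
      (timeDeriv (fun w => ψ₁ w + ψ₂ w) z)

/-- Metric viscosity solution. -/
def IsSol (Q : Set (ℝ × X)) (F : (ℝ × X) → ℝ → ℝ → ℝ) (u : ℝ × X → EReal) : Prop :=
  IsSubsol Q F u ∧ IsSupersol Q F u

/-- Metric viscosity subsolution of the stationary equation H(x,|Dv|)=0 in U. -/
def IsSubsolS (U : Set X) (H : X → ℝ → ℝ) (v : X → EReal) : Prop :=
  ∀ ψ₁ ψ₂ : X → ℝ, IsC1UnderU U ψ₁ → IsCU U ψ₂ → ∀ x ∈ U,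
    (∃ R > 0, uscEnv U v x = ((ψ₁ x + ψ₂ x : ℝ) : EReal) ∧
      ∀ w ∈ Metric.ball x R ∩ U, uscEnv U v w ≤ ((ψ₁ w + ψ₂ w : ℝ) : EReal)) →
    Hr H (-(uscEnvR U (mslope ψ₂) x)) x (mslope ψ₁ x) ≤ 0

/-- Metric viscosity supersolution of the stationary equation H(x,|Dv|)=0 in U. -/
def IsSupersolS (U : Set X) (H : X → ℝ → ℝ) (v : X → EReal) : Prop :=
  ∀ ψ₁ ψ₂ : X → ℝ, IsC1UpperU U ψ₁ → IsCU U ψ₂ → ∀ x ∈ U,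
    (∃ R > 0, lscEnv U v x = ((ψ₁ x + ψ₂ x : ℝ) : EReal) ∧
      ∀ w ∈ Metric.ball x R ∩ U, ((ψ₁ w + ψ₂ w : ℝ) : EReal) ≤ lscEnv U v w) →
    0 ≤ Hr H (uscEnvR U (mslope ψ₂) x) x (mslope ψ₁ x)

/-- Metric viscosity solution of the stationary equation. -/
def IsSolS (U : Set X) (H : X → ℝ → ℝ) (v : X → EReal) : Prop :=
  IsSubsolS U H v ∧ IsSupersolS U H v

section Slopes

theorem limsup_punctured_eq_of_geodesic (hgeo : IsGeodesicSpace X) (α : ℝ)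
    (x y : X) (q : X → ℝ)
    (hlow : ∀ z, max (α * (dist x y ^ 2 - dist z y ^ 2)) 0 / dist z x ≤ q z)
    (hup : ∀ z, q z ≤ α * (2 * dist x y + dist z x)) :
    Filter.limsup q (𝓝[≠] x) = 2 * α * dist x y := by
  have hq0 : ∀ z, 0 ≤ q z := fun z =>
    le_trans (div_nonneg (le_max_right _ _) dist_nonneg) (hlow z)
  rcases (𝓝[≠] x).eq_or_neBot with hbot | hne
  · have hxy : x = y := by
      by_contra hxy
      obtain ⟨f, h0, h1, hf⟩ := hgeo x y
      have hd : 0 < dist x y := dist_pos.2 hxy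
      have hmem : ({x} : Set X) ∈ 𝓝 x := by
        have h := mem_nhdsWithin_iff_exists_mem_nhds_inter.1
          (show (∅ : Set X) ∈ 𝓝[≠] x by rw [hbot]; exact Filter.mem_bot)
        obtain ⟨u, hu, hsub⟩ := h
        refine Filter.mem_of_superset hu fun z hz => ?_
        by_contra hzx
        exact hsub ⟨hz, hzx⟩
      obtain ⟨r, hr, hball⟩ := Metric.mem_nhds_iff.1 hmem
      set s := min 1 (r / (2 * dist x y)) with hs
      have hs0 : 0 < s := lt_min one_pos (by positivity)
      have hs1 : s ≤ 1 := min_le_left _ _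
      have hdist : dist (f s) x = s * dist x y := by
        have := hf s ⟨hs0.le, hs1⟩ 0 ⟨le_rfl, zero_le_one⟩
        rwa [h0, sub_zero, abs_of_pos hs0] at this
      have hlt : dist (f s) x < r := by
        rw [hdist]
        calc s * dist x y ≤ r / (2 * dist x y) * dist x y := by
              gcongr; exact min_le_right _ _
          _ = r / 2 := by field_simp
          _ < r := by linarith
      have : f s = x := hball hlt
      rw [this, dist_self] at hdist
      exact absurd hdist (by positivity)
    subst hxy
    rw [hbot]
    simp [Filter.limsup, Filter.limsSup]
  · have htend : Tendsto (fun z => α * (2 * dist x y + dist z x)) (𝓝[≠] x)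
        (𝓝 (2 * α * dist x y)) := by
      have : Continuous fun z => α * (2 * dist x y + dist z x) := by fun_prop
      have h := this.tendsto x
      simp only [dist_self, add_zero] at h
      rw [show 2 * α * dist x y = α * (2 * dist x y) by ring]
      exact h.mono_left nhdsWithin_le_nhds
    have hbdd : (𝓝[≠] x).IsBoundedUnder (· ≤ ·) q :=
      htend.isBoundedUnder_le.mono_le (Eventually.of_forall hup)
    have hcob : (𝓝[≠] x).IsCoboundedUnder (· ≤ ·) q :=
      (Filter.isBoundedUnder_of ⟨0, hq0⟩ : (𝓝[≠] x).IsBoundedUnder (· ≥ ·) q).isCoboundedUnder_le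
    apply le_antisymm
    · rw [← htend.limsup_eq]
      exact Filter.limsup_le_limsup (Eventually.of_forall hup) hcob htend.isBoundedUnder_le
    · rcases eq_or_ne x y with rfl | hxy
      · simp only [dist_self, mul_zero]
        exact Filter.le_limsup_of_frequently_le (Frequently.of_forall hq0) hbdd
      · have hd : 0 < dist x y := dist_pos.2 hxy
        obtain ⟨f, h0, h1, hf⟩ := hgeo x y
        have hx : ∀ s ∈ Set.Ioc (0 : ℝ) 1, dist (f s) x = s * dist x y := fun s hs => by
          have := hf s ⟨hs.1.le, hs.2⟩ 0 ⟨le_rfl, zero_le_one⟩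
          rwa [h0, sub_zero, abs_of_pos hs.1] at this
        have hy : ∀ s ∈ Set.Ioc (0 : ℝ) 1, dist (f s) y = (1 - s) * dist x y := fun s hs => by
          have := hf s ⟨hs.1.le, hs.2⟩ 1 ⟨zero_le_one, le_rfl⟩
          rwa [h1, abs_sub_comm, abs_of_nonneg (sub_nonneg.2 hs.2)] at this
        have hIoc : Set.Ioc (0 : ℝ) 1 ∈ 𝓝[>] (0 : ℝ) := Ioc_mem_nhdsGT one_pos
        have hftend : Tendsto f (𝓝[>] 0) (𝓝[≠] x) := by
          refine tendsto_nhdsWithin_iff.2 ⟨?_, ?_⟩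
          · rw [tendsto_iff_dist_tendsto_zero]
            have h : Tendsto (fun s : ℝ => s * dist x y) (𝓝[>] 0) (𝓝 0) := by
              have : Continuous fun s : ℝ => s * dist x y := by fun_prop
              have h := this.tendsto 0
              rw [zero_mul] at h
              exact h.mono_left nhdsWithin_le_nhds
            refine h.congr' ?_
            filter_upwards [hIoc] with s hs using (hx s hs).symm
          · filter_upwards [hIoc] with s hs
            have : 0 < dist (f s) x := by rw [hx s hs]; exact mul_pos hs.1 hd
            exact dist_pos.1 this
        refine le_of_forall_lt fun b hb => ?_
        obtain ⟨b', hb1, hb2⟩ := exists_between hb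
        refine hb1.trans_le (Filter.le_limsup_of_frequently_le ?_ hbdd)
        refine hftend.frequently (Eventually.frequently ?_)
        have ht : Tendsto (fun s : ℝ => α * (2 - s) * dist x y) (𝓝[>] 0)
            (𝓝 (2 * α * dist x y)) := by
          have : Continuous fun s : ℝ => α * (2 - s) * dist x y := by fun_prop
          have h := this.tendsto 0
          rw [sub_zero, mul_comm α 2] at h
          exact h.mono_left nhdsWithin_le_nhds
        filter_upwards [hIoc, ht.eventually (lt_mem_nhds hb2)] with s hs hs'
        refine hs'.le.trans (le_trans ?_ (hlow (f s)))
        rw [hx s hs, hy s hs, le_div_iff₀ (mul_pos hs.1 hd)]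
        refine le_trans (le_of_eq ?_) (le_max_left _ _)
        ring

theorem abs_sq_dist_sub_le (x y z : X) :
    |dist z y ^ 2 - dist x y ^ 2| ≤ (2 * dist x y + dist z x) * dist z x := by
  have h1 := abs_dist_sub_le z x y
  have h2 := dist_triangle z x y
  rw [show dist z y ^ 2 - dist x y ^ 2 = (dist z y + dist x y) * (dist z y - dist x y) by ring,
    abs_mul, abs_of_nonneg (by positivity)]
  exact mul_le_mul (by linarith) h1 (abs_nonneg _) (by positivity)

theorem div_dist_le_of_le_mul {a b : ℝ} {x z : X} (hb : 0 ≤ b) (h : a ≤ b * dist z x) :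
    a / dist z x ≤ b :=
  div_le_of_le_mul₀ dist_nonneg hb h

theorem mslope_sq_dist (hgeo : IsGeodesicSpace X) (k α : ℝ) (x y : X) :
    mslope (fun z => k + α * dist z y ^ 2) x = 2 * |α| * dist x y := by
  have e : ∀ z, |k + α * dist z y ^ 2 - (k + α * dist x y ^ 2)|
      = |α| * |dist z y ^ 2 - dist x y ^ 2| := fun z => by
    rw [← abs_mul]; congr 1; ring
  refine limsup_punctured_eq_of_geodesic hgeo |α| x y _ (fun z => ?_) fun z => ?_
  · simp only [e]
    gcongr
    refine max_le ?_ (by positivity)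
    gcongr
    rw [abs_sub_comm]
    exact le_abs_self _
  · simp only [e]
    refine div_dist_le_of_le_mul (by positivity) ?_
    rw [mul_assoc]
    gcongr
    exact abs_sq_dist_sub_le x y z

theorem mslopeDown_sq_dist (hgeo : IsGeodesicSpace X) (k : ℝ) {α : ℝ} (hα : 0 ≤ α) (x y : X) :
    mslopeDown (fun z => k + α * dist z y ^ 2) x = 2 * α * dist x y := by
  have e : ∀ z, k + α * dist x y ^ 2 - (k + α * dist z y ^ 2)
      = α * (dist x y ^ 2 - dist z y ^ 2) := fun z => by ring
  refine limsup_punctured_eq_of_geodesic hgeo α x y _ (fun z => ?_) fun z => ?_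
  · simp only [e]; exact le_rfl
  · simp only [e]
    refine div_dist_le_of_le_mul (by positivity) (max_le ?_ (by positivity))
    rw [mul_assoc]
    gcongr
    exact (le_abs_self _).trans ((abs_sub_comm _ _).trans_le (abs_sq_dist_sub_le x y z))

theorem mslopeUp_sq_dist (hgeo : IsGeodesicSpace X) (k : ℝ) {α : ℝ} (hα : 0 ≤ α) (x y : X) :
    mslopeUp (fun z => k + -α * dist z y ^ 2) x = 2 * α * dist x y := by
  rw [← mslopeDown_sq_dist hgeo (-k) hα x y]
  unfold mslopeUp mslopeDown
  congr 1
  funext z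
  congr 2
  ring

theorem mslope_zero (x : X) : mslope (fun _ => (0 : ℝ)) x = 0 := by
  rcases (𝓝[≠] x).eq_or_neBot with hbot | hne
  · simp [mslope, hbot, Filter.limsup, Filter.limsSup]
  · simp [mslope]

end Slopes

section TestFunctions

/-- The test function `k + α d(x,y)² + b (t - t₀) + γ (t - t₀)²`. -/
def quadTest (k α b γ t₀ : ℝ) (y : X) (z : ℝ × X) : ℝ :=
  k + α * dist z.2 y ^ 2 + b * (z.1 - t₀) + γ * (z.1 - t₀) ^ 2

theorem hasDerivAt_quadTest (k α b γ t₀ : ℝ) (y : X) (z : ℝ × X) :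
    HasDerivAt (fun s : ℝ => quadTest k α b γ t₀ y (s, z.2)) (b + 2 * γ * (z.1 - t₀)) z.1 := by
  have h := (hasDerivAt_id z.1).sub_const t₀
  have := ((h.const_mul b).const_add (k + α * dist z.2 y ^ 2)).add ((h.pow 2).const_mul γ)
  refine this.congr_deriv ?_
  simp
  ring

theorem timeDeriv_quadTest (k α b γ t₀ : ℝ) (y : X) (z : ℝ × X) :
    timeDeriv (quadTest k α b γ t₀ y) z = b + 2 * γ * (z.1 - t₀) :=
  (hasDerivAt_quadTest k α b γ t₀ y z).deriv

theorem LocallyLipschitz.locLipOn {α : Type*} [PseudoMetricSpace α] {f : α → ℝ}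
    (hf : LocallyLipschitz f) (s : Set α) : LocLipOn s f := fun z _ =>
  let ⟨K, t, ht, h⟩ := hf z
  ⟨K, t, nhdsWithin_le_nhds ht, h⟩

theorem isCQ_quadTest (Q : Set (ℝ × X)) (k α b γ t₀ : ℝ) (y : X) :
    IsCQ Q (quadTest k α b γ t₀ y) := by
  refine ⟨LocallyLipschitz.locLipOn ?_ Q,
    fun z _ => (hasDerivAt_quadTest k α b γ t₀ y z).differentiableAt, ?_⟩
  · have h1 : LocallyLipschitz fun q : ℝ × ℝ =>
        k + α * q.2 ^ 2 + b * (q.1 - t₀) + γ * (q.1 - t₀) ^ 2 :=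
      ContDiff.locallyLipschitz (𝕂 := ℝ) (by fun_prop)
    have h2 : LocallyLipschitz fun z : ℝ × X => (z.1, dist z.2 y) :=
      (LipschitzWith.prodMk LipschitzWith.prod_fst
        ((LipschitzWith.dist_left y).comp LipschitzWith.prod_snd)).locallyLipschitz
    intro z
    obtain ⟨K, t, ht, h⟩ := h1.comp h2 z
    exact ⟨K, t, ht, fun p hp q hq => h hp hq⟩
  · simp only [funext (timeDeriv_quadTest k α b γ t₀ y)]
    fun_prop

theorem slopeT_quadTest (hgeo : IsGeodesicSpace X) (k α b γ t₀ : ℝ) (y : X) (z : ℝ × X) :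
    slopeT (quadTest k α b γ t₀ y) z = 2 * |α| * dist z.2 y := by
  rw [← mslope_sq_dist hgeo (k + b * (z.1 - t₀) + γ * (z.1 - t₀) ^ 2) α]
  unfold slopeT quadTest
  congr 1
  funext w
  ring

theorem isC1UnderQ_quadTest (hgeo : IsGeodesicSpace X) (Q : Set (ℝ × X)) (k : ℝ) {α : ℝ}
    (hα : 0 ≤ α) (b γ t₀ : ℝ) (y : X) : IsC1UnderQ Q (quadTest k α b γ t₀ y) := by
  refine ⟨isCQ_quadTest Q k α b γ t₀ y, fun z _ => ?_, ?_⟩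
  · rw [slopeT_quadTest hgeo, abs_of_nonneg hα,
      ← mslopeDown_sq_dist hgeo (k + b * (z.1 - t₀) + γ * (z.1 - t₀) ^ 2) hα]
    unfold slopeDownT quadTest
    congr 1
    funext w
    ring
  · simp only [funext (slopeT_quadTest hgeo k α b γ t₀ y)]
    fun_prop

theorem isC1UpperQ_quadTest (hgeo : IsGeodesicSpace X) (Q : Set (ℝ × X)) (k : ℝ) {α : ℝ}
    (hα : 0 ≤ α) (b γ t₀ : ℝ) (y : X) : IsC1UpperQ Q (quadTest k (-α) b γ t₀ y) := by
  refine ⟨isCQ_quadTest Q k (-α) b γ t₀ y, fun z _ => ?_, ?_⟩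
  · rw [slopeT_quadTest hgeo, abs_neg, abs_of_nonneg hα,
      ← mslopeUp_sq_dist hgeo (k + b * (z.1 - t₀) + γ * (z.1 - t₀) ^ 2) hα]
    unfold slopeUpT quadTest
    congr 1
    funext w
    ring
  · simp only [funext (slopeT_quadTest hgeo k (-α) b γ t₀ y)]
    fun_prop

theorem isCQ_zero (Q : Set (ℝ × X)) : IsCQ Q (fun _ => (0 : ℝ)) := by
  refine ⟨LocallyLipschitz.locLipOn (LipschitzWith.const 0).locallyLipschitz Q,
    fun z _ => differentiableAt_const 0, ?_⟩
  have : timeDeriv (fun _ : ℝ × X => (0 : ℝ)) = fun _ => 0 := by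
    funext z; simp [timeDeriv]
  rw [this]
  exact continuousOn_const

theorem uscEnvR_slopeT_zero {Q : Set (ℝ × X)} {z : ℝ × X} (hz : z ∈ Q) :
    uscEnvR Q (slopeT fun _ : ℝ × X => (0 : ℝ)) z = 0 := by
  have : slopeT (fun _ : ℝ × X => (0 : ℝ)) = fun _ => 0 := by
    funext w; exact mslope_zero w.2
  have hne : (𝓝[Q] z).NeBot := mem_closure_iff_nhdsWithin_neBot.1 (subset_closure hz)
  rw [this, uscEnvR, Filter.limsup_const]

theorem uscEnv_coe_eq {α : Type*} [TopologicalSpace α] {s : Set α} {u : α → ℝ}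
    (hu : ContinuousOn u s) {z : α} (hz : z ∈ s) :
    uscEnv s (fun w => ((u w : ℝ) : EReal)) z = (u z : EReal) := by
  have hne : (𝓝[s] z).NeBot := mem_closure_iff_nhdsWithin_neBot.1 (subset_closure hz)
  exact ((continuous_coe_real_ereal.tendsto _).comp (hu z hz)).limsup_eq

theorem lscEnv_coe_eq {α : Type*} [TopologicalSpace α] {s : Set α} {u : α → ℝ}
    (hu : ContinuousOn u s) {z : α} (hz : z ∈ s) :
    lscEnv s (fun w => ((u w : ℝ) : EReal)) z = (u z : EReal) := by
  have hne : (𝓝[s] z).NeBot := mem_closure_iff_nhdsWithin_neBot.1 (subset_closure hz)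
  exact ((continuous_coe_real_ereal.tendsto _).comp (hu z hz)).liminf_eq

theorem Fr_zero_left {Y : Type*} (F : (ℝ × Y) → ℝ → ℝ → ℝ) (z : ℝ × Y) (p q : ℝ) :
    Fr F 0 z p q = F z p q := by
  simp [Fr]

theorem Hr_zero_left {Y : Type*} (H : Y → ℝ → ℝ) (x : Y) (p : ℝ) : Hr H 0 x p = H x p := by
  simp [Hr]

/-- Viscosity subsolution inequality of `∂ₜv + G(x,|Dv|) ≤ 0`, tested with quadratic functions
touching from above on `[s,∞) × X`. -/
def QuadSubsol (G : X → ℝ → ℝ) (v : ℝ → X → ℝ) : Prop :=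
  ∀ s t₀ : ℝ, ∀ x₀ y : X, ∀ α b γ : ℝ, 0 ≤ s → s < t₀ → 0 ≤ α →
    (∀ t ≥ s, ∀ x, v t x ≤ v t₀ x₀ + α * (dist x y ^ 2 - dist x₀ y ^ 2)
      + b * (t - t₀) + γ * (t - t₀) ^ 2) →
    b + G x₀ (2 * α * dist x₀ y) ≤ 0

/-- Viscosity supersolution inequality of `∂ₜv + G(x,|Dv|) ≥ 0`, tested with quadratic functions
touching from below on `[s,∞) × X`. -/
def QuadSupersol (G : X → ℝ → ℝ) (v : ℝ → X → ℝ) : Prop :=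
  ∀ s t₀ : ℝ, ∀ x₀ y : X, ∀ α b γ : ℝ, 0 ≤ s → s < t₀ → 0 ≤ α →
    (∀ t ≥ s, ∀ x, v t₀ x₀ - α * (dist x y ^ 2 - dist x₀ y ^ 2)
      + b * (t - t₀) + γ * (t - t₀) ^ 2 ≤ v t x) →
    0 ≤ b + G x₀ (2 * α * dist x₀ y)

theorem IsSubsol.quadSubsol (hgeo : IsGeodesicSpace X) {H : X → ℝ → ℝ} {u : ℝ × X → ℝ} (c : ℝ)
    (hu : ContinuousOn u (Set.Ioi (0:ℝ) ×ˢ (Set.univ : Set X)))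
    (hsub : IsSubsol (Set.Ioi (0:ℝ) ×ˢ (Set.univ : Set X)) (fun z p q => q + H z.2 p)
      (fun z => ((u z : ℝ) : EReal))) :
    QuadSubsol (fun x p => H x p - c) (fun t x => u (t, x) + c * t) := by
  intro s t₀ x₀ y α b γ hs hst hα hle
  have hz : (t₀, x₀) ∈ Set.Ioi (0:ℝ) ×ˢ (Set.univ : Set X) := ⟨hs.trans_lt hst, trivial⟩
  have key := hsub (quadTest (u (t₀, x₀) - α * dist x₀ y ^ 2) α (b - c) γ t₀ y) (fun _ => 0)
    (isC1UnderQ_quadTest hgeo _ _ hα _ _ _ _) (isCQ_zero _) (t₀, x₀) hz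
    ⟨t₀ - s, sub_pos.2 hst, by
      rw [uscEnv_coe_eq hu hz]
      simp [quadTest], fun w hw => by
      rw [uscEnv_coe_eq hu hw.2, EReal.coe_le_coe_iff]
      have h1 : dist w.1 t₀ < t₀ - s := (le_max_left _ _).trans_lt hw.1
      rw [Real.dist_eq] at h1
      have := hle w.1 (by linarith [(abs_lt.1 h1).1]) w.2
      simp only [quadTest]
      linarith⟩
  rw [uscEnvR_slopeT_zero hz, neg_zero, Fr_zero_left] at key
  simp only [add_zero] at key
  rw [slopeT_quadTest hgeo, abs_of_nonneg hα] at key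
  rw [show (fun w => quadTest (u (t₀, x₀) - α * dist x₀ y ^ 2) α (b - c) γ t₀ y w)
    = quadTest (u (t₀, x₀) - α * dist x₀ y ^ 2) α (b - c) γ t₀ y from rfl,
    timeDeriv_quadTest] at key
  simp only [sub_self, mul_zero, add_zero] at key
  linarith

theorem IsSupersol.quadSupersol (hgeo : IsGeodesicSpace X) {H : X → ℝ → ℝ} {u : ℝ × X → ℝ}
    (c : ℝ) (hu : ContinuousOn u (Set.Ioi (0:ℝ) ×ˢ (Set.univ : Set X)))
    (hsup : IsSupersol (Set.Ioi (0:ℝ) ×ˢ (Set.univ : Set X)) (fun z p q => q + H z.2 p)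
      (fun z => ((u z : ℝ) : EReal))) :
    QuadSupersol (fun x p => H x p - c) (fun t x => u (t, x) + c * t) := by
  intro s t₀ x₀ y α b γ hs hst hα hle
  have hz : (t₀, x₀) ∈ Set.Ioi (0:ℝ) ×ˢ (Set.univ : Set X) := ⟨hs.trans_lt hst, trivial⟩
  have key := hsup (quadTest (u (t₀, x₀) + α * dist x₀ y ^ 2) (-α) (b - c) γ t₀ y) (fun _ => 0)
    (isC1UpperQ_quadTest hgeo _ _ hα _ _ _ _) (isCQ_zero _) (t₀, x₀) hz
    ⟨t₀ - s, sub_pos.2 hst, by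
      rw [lscEnv_coe_eq hu hz]
      simp [quadTest], fun w hw => by
      rw [lscEnv_coe_eq hu hw.2, EReal.coe_le_coe_iff]
      have h1 : dist w.1 t₀ < t₀ - s := (le_max_left _ _).trans_lt hw.1
      rw [Real.dist_eq] at h1
      have := hle w.1 (by linarith [(abs_lt.1 h1).1]) w.2
      simp only [quadTest]
      linarith⟩
  rw [uscEnvR_slopeT_zero hz, Fr_zero_left] at key
  simp only [add_zero] at key
  rw [slopeT_quadTest hgeo, abs_neg, abs_of_nonneg hα] at key
  rw [show (fun w => quadTest (u (t₀, x₀) + α * dist x₀ y ^ 2) (-α) (b - c) γ t₀ y w)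
    = quadTest (u (t₀, x₀) + α * dist x₀ y ^ 2) (-α) (b - c) γ t₀ y from rfl,
    timeDeriv_quadTest] at key
  simp only [sub_self, mul_zero, add_zero] at key
  linarith

theorem IsSubsolS.quad_touching (hgeo : IsGeodesicSpace X) {G : X → ℝ → ℝ} {w : X → ℝ}
    (hw : Continuous w)
    (hsub : IsSubsolS (Set.univ : Set X) G (fun x => ((w x : ℝ) : EReal)))
    {x₀ y : X} {α : ℝ} (hα : 0 ≤ α)
    (hle : ∀ x, w x ≤ w x₀ + α * (dist x y ^ 2 - dist x₀ y ^ 2)) :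
    G x₀ (2 * α * dist x₀ y) ≤ 0 := by
  have hm := mslope_sq_dist hgeo (w x₀ - α * dist x₀ y ^ 2) α
  have key := hsub (fun x => w x₀ - α * dist x₀ y ^ 2 + α * dist x y ^ 2) (fun _ => 0)
    ⟨LocallyLipschitz.locLipOn (by
        have h1 : LocallyLipschitz fun q : ℝ => w x₀ - α * dist x₀ y ^ 2 + α * q ^ 2 :=
          ContDiff.locallyLipschitz (𝕂 := ℝ) (by fun_prop)
        exact h1.comp (LipschitzWith.dist_left y).locallyLipschitz) _,
      fun x _ => by rw [hm, mslopeDown_sq_dist hgeo _ hα, abs_of_nonneg hα],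
      by
        rw [funext fun x => hm x y]
        fun_prop⟩
    (LocallyLipschitz.locLipOn (LipschitzWith.const 0).locallyLipschitz _) x₀ trivial
    ⟨1, one_pos, by
      rw [uscEnv_coe_eq hw.continuousOn (Set.mem_univ _)]
      simp, fun z hz => by
      rw [uscEnv_coe_eq hw.continuousOn (Set.mem_univ _), EReal.coe_le_coe_iff]
      linarith [hle z]⟩
  have h0 : mslope (fun _ : X => (0 : ℝ)) = fun _ => 0 := funext mslope_zero
  rw [h0, uscEnvR, nhdsWithin_univ, Filter.limsup_const, neg_zero, Hr_zero_left, hm,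
    abs_of_nonneg hα] at key
  exact key

theorem IsSubsolS.quadSubsol (hgeo : IsGeodesicSpace X) {G : X → ℝ → ℝ} {w : X → ℝ}
    (hw : Continuous w)
    (hsub : IsSubsolS (Set.univ : Set X) G (fun x => ((w x : ℝ) : EReal))) :
    QuadSubsol G (fun _ x => w x) := by
  intro s t₀ x₀ y α b γ hs hst hα hle
  have h1 := hsub.quad_touching hgeo hw hα (x₀ := x₀) (y := y) fun x => by
    simpa using hle t₀ hst.le x
  suffices b ≤ 0 by linarith
  by_contra! hb
  set τ := min (t₀ - s) (b / (2 * (|γ| + 1))) with hτ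
  have hτ0 : 0 < τ := lt_min (sub_pos.2 hst) (by positivity)
  have h2 := hle (t₀ - τ) (by linarith [min_le_left (t₀ - s) (b / (2 * (|γ| + 1)))]) x₀
  have h3 : τ * (2 * (|γ| + 1)) ≤ b := by
    rw [← le_div_iff₀ (by positivity)]; exact min_le_right _ _
  have h4 : γ * τ ≤ |γ| * τ := by gcongr; exact le_abs_self γ
  have h5 : 0 ≤ τ * (γ * τ - b) := by linarith [h2]
  have h6 := nonneg_of_mul_nonneg_right h5 hτ0
  nlinarith [abs_nonneg γ]

end TestFunctions

section Abstract

/-- `w` descends from each `x` at a rate at most `p` to first order, for every `p ≥ 0` with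
`G(x,p) > 0`. -/
def DescentBound (G : X → ℝ → ℝ) (w : X → ℝ) : Prop :=
  ∀ x p, 0 ≤ p → 0 < G x p → ∃ C : ℝ, ∀ y, w x - w y ≤ p * dist x y + C * dist x y ^ 2

theorem exists_lt_pos_of_pos {g : ℝ → ℝ} (hg : Continuous g) (h0 : g 0 ≤ 0) {p : ℝ}
    (hp : 0 ≤ p) (hpos : 0 < g p) : ∃ q, 0 ≤ q ∧ q < p ∧ 0 < g q := by
  have hp' : 0 < p := hp.lt_of_ne fun h => by rw [← h] at hpos; exact hpos.not_ge h0
  have h1 : ∀ᶠ q in 𝓝[<] p, 0 < g q :=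
    nhdsWithin_le_nhds (hg.continuousAt.eventually (lt_mem_nhds hpos))
  have h2 : ∀ᶠ q in 𝓝[<] p, q ∈ Set.Ioo 0 p := Ioo_mem_nhdsLT hp'
  obtain ⟨q, hq1, hq2⟩ := (h1.and h2).exists
  exact ⟨q, hq2.1.le, hq2.2, hq1⟩

theorem exists_isMax_sub_sq {Y : Type*} [TopologicalSpace Y] [CompactSpace Y] [Nonempty Y]
    {f : ℝ × Y → ℝ} {s a b γ : ℝ} (t₀ : ℝ)
    (hf : ContinuousOn f (Set.Ici s ×ˢ (Set.univ : Set Y)))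
    (hle : ∀ t ≥ s, ∀ y, f (t, y) ≤ a + b * t) (hγ : 0 < γ) :
    ∃ t₁ ≥ s, ∃ y₁, ∀ t ≥ s, ∀ y, f (t, y) - γ * (t - t₀) ^ 2 ≤ f (t₁, y₁) - γ * (t₁ - t₀) ^ 2 := by
  obtain ⟨y₀⟩ := ‹Nonempty Y›
  set β := f (s, y₀) - γ * (s - t₀) ^ 2 with hβ
  have hT : ∃ T ≥ s, ∀ t ≥ T, a + b * t - γ * (t - t₀) ^ 2 ≤ β := by
    refine ⟨max s (t₀ + (1 + (|a + b * t₀ - β| + |b|) / γ)), le_max_left _ _, fun t ht => ?_⟩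
    have h1 : 1 + (|a + b * t₀ - β| + |b|) / γ ≤ t - t₀ := by
      linarith [le_trans (le_max_right _ _) ht]
    set τ := t - t₀ with hτ
    have h2 : 0 ≤ (|a + b * t₀ - β| + |b|) / γ := by positivity
    have h3 : |a + b * t₀ - β| + |b| ≤ γ * τ := by
      have : (|a + b * t₀ - β| + |b|) / γ ≤ τ := by linarith
      rwa [div_le_iff₀ hγ, mul_comm τ] at this
    have h4 : (|a + b * t₀ - β| + |b|) * τ ≤ γ * τ * τ := by gcongr; linarith
    have h5 : |a + b * t₀ - β| * 1 ≤ |a + b * t₀ - β| * τ := by gcongr; linarith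
    have h6 : b * τ ≤ |b| * τ := mul_le_mul_of_nonneg_right (le_abs_self b) (by linarith)
    have h7 := le_abs_self (a + b * t₀ - β)
    have h8 : t = t₀ + τ := by rw [hτ]; ring
    rw [h8]
    nlinarith
  obtain ⟨T, hsT, hT⟩ := hT
  have hcomp : IsCompact (Set.Icc s T ×ˢ (Set.univ : Set Y)) := isCompact_Icc.prod isCompact_univ
  have hcont : ContinuousOn (fun z : ℝ × Y => f z - γ * (z.1 - t₀) ^ 2)
      (Set.Icc s T ×ˢ (Set.univ : Set Y)) :=
    (hf.mono (Set.prod_mono Set.Icc_subset_Ici_self le_rfl)).sub (by fun_prop)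
  obtain ⟨z, hz, hmax⟩ := hcomp.exists_isMaxOn ⟨(s, y₀), ⟨le_rfl, hsT⟩, trivial⟩ hcont
  refine ⟨z.1, hz.1.1, z.2, fun t ht y => ?_⟩
  rcases le_total t T with htT | htT
  · exact hmax (show (t, y) ∈ _ from ⟨⟨ht, htT⟩, trivial⟩)
  · have h1 : β ≤ _ := hmax (show (s, y₀) ∈ _ from ⟨⟨le_rfl, hsT⟩, trivial⟩)
    have h2 := hT t htT
    have h3 := hle t ht y
    simp only [Prod.mk.eta] at h1 ⊢
    linarith

theorem abs_two_mul_lt {lam τ B η : ℝ} (hlam : 0 < lam) (hη : 0 < η)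
    (h : lam * τ ^ 2 ≤ B) (hB : 4 * lam * B < η ^ 2) : |2 * lam * τ| < η := by
  refine abs_lt_of_sq_lt_sq ?_ hη.le
  nlinarith

theorem abs_lt_of_mul_sq_le {lam τ B : ℝ} (hlam : 0 < lam) (hB : 0 ≤ B)
    (h : lam * τ ^ 2 ≤ B) : |τ| < 1 + B / lam := by
  have h0 : 0 ≤ B / lam := by positivity
  refine abs_lt_of_sq_lt_sq ?_ (by linarith)
  have : τ ^ 2 ≤ B / lam := by rw [le_div_iff₀ hlam]; linarith
  nlinarith

theorem limsup_nonneg_of_nonneg {α : Type*} {f : Filter α} {q : α → ℝ} (hq : ∀ z, 0 ≤ q z) :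
    0 ≤ Filter.limsup q f := by
  rcases f.eq_or_neBot with hbot | hne
  · simp [hbot, Filter.limsup, Filter.limsSup]
  · rw [Filter.limsup_eq]
    refine Real.sInf_nonneg fun a ha => ?_
    obtain ⟨y, hy⟩ := Filter.Eventually.exists (f := f) ha
    exact (hq y).trans hy

theorem limsup_le_of_nonneg {α : Type*} {f : Filter α} {q : α → ℝ} {K : ℝ} (hK : 0 ≤ K)
    (hq : ∀ z, 0 ≤ q z) (hle : ∀ᶠ z in f, q z ≤ K) : Filter.limsup q f ≤ K := by
  rcases f.eq_or_neBot with hbot | hne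
  · simpa [hbot, Filter.limsup, Filter.limsSup] using hK
  · exact Filter.limsup_le_of_le (Filter.isBoundedUnder_of ⟨0, hq⟩ :
      f.IsBoundedUnder (· ≥ ·) q).isCoboundedUnder_le hle

theorem DescentBound.isSubsolS {G : X → ℝ → ℝ} (hG : Continuous fun w : X × ℝ => G w.1 w.2)
    (hG0 : ∀ x, G x 0 ≤ 0) {w : X → ℝ} (hw : Continuous w) (hQ : DescentBound G w) :
    IsSubsolS (Set.univ : Set X) G (fun x => ((w x : ℝ) : EReal)) := by
  rintro ψ₁ ψ₂ ⟨-, hdown, -⟩ hψ₂ x - ⟨R, hR, heq, hle⟩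
  simp only [uscEnv_coe_eq hw.continuousOn (Set.mem_univ _), EReal.coe_le_coe_iff,
    EReal.coe_eq_coe_iff] at heq hle
  have hGx : Continuous (G x) := hG.comp (continuous_const.prodMk continuous_id)
  rw [← hdown (Set.mem_univ x)]
  set p₁ := mslopeDown ψ₁ x with hp₁
  set r := uscEnvR Set.univ (mslope ψ₂) x with hr
  have hquot₁ : ∀ y, 0 ≤ max (ψ₁ x - ψ₁ y) 0 / dist y x := fun y =>
    div_nonneg (le_max_right _ _) dist_nonneg
  have hquot₂ : ∀ z y, 0 ≤ |ψ₂ y - ψ₂ z| / dist y z := fun z y => by positivity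
  have hp₁0 : 0 ≤ p₁ := limsup_nonneg_of_nonneg hquot₁
  have hr0 : 0 ≤ r := limsup_nonneg_of_nonneg fun z => limsup_nonneg_of_nonneg (hquot₂ z)
  obtain ⟨K, t, ht, hK⟩ := hψ₂ x (Set.mem_univ x)
  rw [nhdsWithin_univ] at ht
  have hloc : ∀ᶠ z in 𝓝 x, ∀ᶠ y in 𝓝[≠] z, |ψ₂ y - ψ₂ z| / dist y z ≤ K := by
    filter_upwards [eventually_mem_nhds_iff.2 ht] with z hz
    filter_upwards [nhdsWithin_le_nhds hz] with y hy
    refine div_dist_le_of_le_mul K.2 ?_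
    rw [← Real.dist_eq]
    exact hK.dist_le_mul y hy z (mem_of_mem_nhds hz)
  have hmr : mslope ψ₂ x ≤ r := by
    rw [hr, uscEnvR, nhdsWithin_univ]
    refine Filter.le_limsup_of_frequently_le (fun h => h.self_of_nhds le_rfl) ⟨K, ?_⟩
    rw [Filter.eventually_map]
    exact hloc.mono fun z hz => limsup_le_of_nonneg K.2 (hquot₂ z) hz
  have hmain : G x (max (p₁ - r) 0) ≤ 0 := by
    by_contra! hpos
    obtain ⟨q, hq0, hq1, hq2⟩ := exists_lt_pos_of_pos hGx (hG0 x) (le_max_right _ _) hpos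
    have hqp : q < p₁ - r := by
      rcases lt_max_iff.1 hq1 with h | h
      · exact h
      · exact absurd hq0 h.not_ge
    obtain ⟨C, hC⟩ := hQ x q hq0 hq2
    set ε := (p₁ - r - q) / 3 with hε
    have hε0 : 0 < ε := by linarith
    have h1 : ∀ᶠ y in 𝓝[≠] x, |ψ₂ y - ψ₂ x| / dist y x < mslope ψ₂ x + ε :=
      Filter.eventually_lt_of_limsup_lt (lt_add_of_pos_right (mslope ψ₂ x) hε0)
        ⟨K, Filter.eventually_map.2 hloc.self_of_nhds⟩
    have h2 : ∀ᶠ y in 𝓝[≠] x, C * dist x y < ε := by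
      have hc : Continuous fun y => C * dist x y := by fun_prop
      refine nhdsWithin_le_nhds (hc.continuousAt.eventually (gt_mem_nhds ?_))
      simpa using hε0
    have h3 : ∀ᶠ y in 𝓝[≠] x, y ∈ Metric.ball x R :=
      nhdsWithin_le_nhds (Metric.ball_mem_nhds x hR)
    have h4 : p₁ ≤ q + (mslope ψ₂ x + ε) + ε := by
      have hm0 : 0 ≤ mslope ψ₂ x := limsup_nonneg_of_nonneg (hquot₂ x)
      refine limsup_le_of_nonneg (by linarith) hquot₁ ?_
      filter_upwards [h1, h2, h3, self_mem_nhdsWithin] with y hy1 hy2 hy3 hyx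
      have hd : 0 < dist y x := dist_pos.2 hyx
      rw [div_lt_iff₀ hd] at hy1
      have hy4 := hC y
      have hy5 := hle y ⟨hy3, Set.mem_univ y⟩
      rw [dist_comm x y] at hy2 hy4
      refine div_dist_le_of_le_mul (by linarith) (max_le ?_ ?_)
      · have hy6 := neg_abs_le (ψ₂ y - ψ₂ x)
        have hy6' := le_abs_self (ψ₂ y - ψ₂ x)
        have hy7 : C * dist y x * dist y x ≤ ε * dist y x := by gcongr
        nlinarith
      · exact mul_nonneg (by linarith) hd.le
    linarith
  rcases hr0.eq_or_lt with h0 | h0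
  · rw [← h0, neg_zero, Hr_zero_left]
    rwa [← h0, sub_zero, max_eq_left hp₁0] at hmain
  · rw [Hr, if_neg (by linarith)]
    refine le_trans (csInf_le ?_ ⟨min 1 (p₁ / r), ⟨?_, min_le_left _ _⟩, rfl⟩) ?_
    · exact (isCompact_Icc.image (by fun_prop)).bddBelow
    · exact le_trans (by norm_num) (le_min zero_le_one (by positivity : 0 ≤ p₁ / r))
    · have e : p₁ + -r * min 1 (p₁ / r) = max (p₁ - r) 0 := by
        rcases le_total 1 (p₁ / r) with h | h
        · rw [min_eq_left h]
          rw [le_div_iff₀ h0] at h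
          rw [max_eq_left (by linarith)]
          ring
        · rw [min_eq_right h]
          rw [div_le_iff₀ h0] at h
          rw [max_eq_right (by linarith)]
          field_simp
          ring
      simpa only [e] using hmain

theorem DescentBound.le_of_isMax (hgeo : IsGeodesicSpace X) {G : X → ℝ → ℝ}
    (hG : Continuous fun w : X × ℝ => G w.1 w.2) (hG0 : ∀ x, G x 0 ≤ 0)
    (hconv : ∀ x θ p, 0 ≤ θ → θ ≤ 1 → G x (θ * p) ≤ θ * G x p + (1 - θ) * G x 0)
    {φ : X → ℝ} (hQ : DescentBound G φ) {θ E : ℝ} (hθ : 0 < θ) (hθ1 : θ ≤ 1) (hE : 0 ≤ E)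
    {x₁ y₁ : X} (hmax : ∀ x, θ * φ x - E * dist x y₁ ^ 2 ≤ θ * φ x₁ - E * dist x₁ y₁ ^ 2) :
    G x₁ (2 * E * dist x₁ y₁) ≤ (1 - θ) * G x₁ 0 := by
  set D := dist x₁ y₁ with hD
  have hD0 : 0 ≤ D := dist_nonneg
  have hslope : ∀ p, 0 ≤ p → 0 < G x₁ p → 2 * E * D ≤ θ * p := by
    intro p hp hpos
    rcases hD0.eq_or_lt with h0 | h0
    · rw [← h0, mul_zero]; positivity
    obtain ⟨C, hC⟩ := hQ x₁ p hp hpos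
    obtain ⟨f, hf0, hf1, hf⟩ := hgeo x₁ y₁
    have hs : ∀ s ∈ Set.Ioc (0:ℝ) 1, 2 * E * D ≤ θ * p + (θ * C + E) * D * s := by
      intro s hs
      have hx : dist x₁ (f s) = s * D := by
        have := hf 0 ⟨le_rfl, zero_le_one⟩ s ⟨hs.1.le, hs.2⟩
        rwa [hf0, zero_sub, abs_neg, abs_of_pos hs.1] at this
      have hy : dist (f s) y₁ = (1 - s) * D := by
        have := hf s ⟨hs.1.le, hs.2⟩ 1 ⟨zero_le_one, le_rfl⟩
        rwa [hf1, abs_sub_comm, abs_of_nonneg (sub_nonneg.2 hs.2)] at this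
      have h1 := hmax (f s)
      have h2 := hC (f s)
      rw [hx] at h2
      rw [hy] at h1
      have h3 := mul_le_mul_of_nonneg_left h2 hθ.le
      refine le_of_mul_le_mul_right ?_ (mul_pos hs.1 h0)
      linarith
    have ht : Tendsto (fun s : ℝ => θ * p + (θ * C + E) * D * s) (𝓝[>] 0) (𝓝 (θ * p)) := by
      have : Continuous fun s : ℝ => θ * p + (θ * C + E) * D * s := by fun_prop
      have h := this.tendsto 0
      simp only [mul_zero, add_zero] at h
      exact h.mono_left nhdsWithin_le_nhds
    refine ge_of_tendsto ht ?_
    filter_upwards [Ioc_mem_nhdsGT (one_pos : (0:ℝ) < 1)] with s hs' using hs s hs'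
  have hle : G x₁ (2 * E * D / θ) ≤ 0 := by
    by_contra! hpos
    obtain ⟨q, hq0, hq1, hq2⟩ := exists_lt_pos_of_pos
      (hG.comp (continuous_const.prodMk continuous_id) : Continuous fun p => G x₁ p)
      (hG0 x₁) (by positivity) hpos
    rw [lt_div_iff₀ hθ] at hq1
    linarith [hslope q hq0 hq2]
  have := hconv x₁ θ (2 * E * D / θ) hθ.le hθ1
  rw [mul_div_cancel₀ _ hθ.ne'] at this
  nlinarith

/-- The values at `x` of continuous stationary subsolutions vanishing at `y`. -/
def subsolValues (G : X → ℝ → ℝ) (x y : X) : Set ℝ :=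
  {r : ℝ | ∃ w : X → ℝ, Continuous w ∧
    IsSubsolS (Set.univ : Set X) G (fun x' => ((w x' : ℝ) : EReal)) ∧ w y = 0 ∧ r = w x}

theorem continuous_of_sub_le {f : X → ℝ} {K : ℝ} (h : ∀ x y, f x - f y ≤ K * dist x y) :
    Continuous f :=
  (LipschitzWith.of_le_add_mul' K fun x y => by linarith [h x y]).continuous

theorem nonempty_subsolValues {G : X → ℝ → ℝ}
    (hG : Continuous fun w : X × ℝ => G w.1 w.2) (hG0 : ∀ x, G x 0 ≤ 0) (x y : X) :
    (subsolValues G x y).Nonempty := by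
  refine ⟨0, fun _ => 0, continuous_const, ?_, rfl, rfl⟩
  refine DescentBound.isSubsolS hG hG0 continuous_const fun z p hp _ => ⟨0, fun z' => ?_⟩
  have : 0 ≤ p * dist z z' := by positivity
  linarith

theorem sSup_subsolValues_self {G : X → ℝ → ℝ}
    (hG : Continuous fun w : X × ℝ => G w.1 w.2) (hG0 : ∀ x, G x 0 ≤ 0) (x : X) :
    sSup (subsolValues G x x) ≤ 0 := by
  refine csSup_le (nonempty_subsolValues hG hG0 x x) ?_
  rintro _ ⟨w, -, -, hx, rfl⟩
  exact hx.le

variable [CompactSpace X]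

/-- Subsolutions bounded in time and Lipschitz in space descend at a controlled rate, after a time
shift that is uniform in the base time. -/
theorem exists_descent_const {G : X → ℝ → ℝ} (hG : Continuous fun w : X × ℝ => G w.1 w.2)
    (hmono : ∀ x p q, 0 ≤ p → p ≤ q → G x p ≤ G x q)
    {M : ℝ} (hM : 0 ≤ M) {x₀ : X} {p : ℝ} (hp : 0 ≤ p) (hpos : 0 < G x₀ p) :
    ∃ C : ℝ, ∀ v : ℝ → X → ℝ, QuadSubsol G v →
      ContinuousOn (fun z : ℝ × X => v z.1 z.2) (Set.Ici (0:ℝ) ×ˢ (Set.univ : Set X)) →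
      (∀ t ≥ 0, ∀ x y, v t x - v t y ≤ M * dist x y) → ∀ B, (∀ t ≥ 0, ∀ x, |v t x| ≤ B) →
      ∃ ρ : ℝ, ∀ t₀ > ρ, ∀ y, ∃ t₁ ≥ t₀ - ρ, 0 ≤ t₁ ∧
        v t₀ x₀ - v t₁ y ≤ p * dist x₀ y + C * dist x₀ y ^ 2 := by
  have hcx : Continuous fun x => G x p :=
    hG.comp (continuous_id.prodMk continuous_const)
  set η := G x₀ p / 2 with hη
  have hη0 : 0 < η := by positivity
  obtain ⟨r, hr, hball⟩ := Metric.mem_nhds_iff.1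
    (hcx.continuousAt.eventually (lt_mem_nhds (half_lt_self hpos)))
  set C := 2 * (M + 1) / r with hC
  have hC0 : 0 < C := by positivity
  have hCr : C * r = 2 * (M + 1) := by rw [hC]; field_simp
  refine ⟨C, fun v hsub hcont hlip B hB => ?_⟩
  have hB0 : 0 ≤ B := (abs_nonneg _).trans (hB 0 le_rfl x₀)
  set lam := η ^ 2 / (8 * B + 1) / 2 with hlam
  have hlam0 : 0 < lam := by positivity
  have hlamB : 4 * lam * (2 * B) < η ^ 2 := by
    have : lam * 2 * (8 * B + 1) = η ^ 2 := by rw [hlam]; field_simp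
    nlinarith
  refine ⟨1 + 2 * B / lam, fun t₀ ht₀ y => ?_⟩
  have hρ0 : 0 ≤ 2 * B / lam := by positivity
  have ht₀0 : 0 ≤ t₀ := by linarith
  rcases le_or_gt (r / 2) (dist x₀ y) with hfar | hnear
  · refine ⟨t₀, by linarith, ht₀0, (hlip t₀ ht₀0 x₀ y).trans ?_⟩
    have h1 : C * (r / 2) ≤ C * dist x₀ y := by gcongr
    have h2 : 0 ≤ p * dist x₀ y := by positivity
    have h3 : M ≤ C * dist x₀ y := by linarith
    have h4 : M * dist x₀ y ≤ C * dist x₀ y * dist x₀ y := by gcongr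
    linarith
  have : Nonempty X := ⟨x₀⟩
  obtain ⟨t₁, ht₁, x₁, hmax⟩ := exists_isMax_sub_sq (s := 0) (a := B) (b := 0) (γ := lam) t₀
    (f := fun z : ℝ × X => v z.1 z.2 - (p * dist z.2 y + C * dist z.2 y ^ 2))
    (hcont.sub (by fun_prop)) (fun t ht x => by
      have := (abs_le.1 (hB t ht x)).2
      have : 0 ≤ p * dist x y + C * dist x y ^ 2 := by positivity
      simp only
      linarith) hlam0
  simp only at hmax
  have hb1 := (abs_le.1 (hB t₁ ht₁ x₁)).2
  have hd0 : 0 ≤ p * dist x₁ y + C * dist x₁ y ^ 2 := by positivity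
  have hτ : lam * (t₁ - t₀) ^ 2 ≤ 2 * B := by
    have h1 := hmax t₀ ht₀0 y
    have h2 := (abs_le.1 (hB t₀ ht₀0 y)).1
    simp only [dist_self, sub_self] at h1
    linarith
  have hτ1 := abs_two_mul_lt hlam0 hη0 hτ hlamB
  have hτ2 := abs_lt.1 (abs_lt_of_mul_sq_le hlam0 (by positivity) hτ)
  have hxy : x₁ = y := by
    by_contra hne
    have hd : 0 < dist x₁ y := dist_pos.2 hne
    set D := dist x₁ y with hD
    have hDr : D < r / 2 := by
      have h1 := hmax t₁ ht₁ y
      simp only [dist_self] at h1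
      have h2 := hlip t₁ ht₁ x₁ y
      have h3 : C * D * D ≤ M * D := by linarith [mul_nonneg hp hd.le]
      have h4 : C * D ≤ M := le_of_mul_le_mul_right h3 hd
      by_contra! h5
      have : C * (r / 2) ≤ C * D := by gcongr
      linarith
    have hx₁ : x₁ ∈ Metric.ball x₀ r := by
      rw [Metric.mem_ball]
      have := dist_triangle x₁ y x₀
      rw [dist_comm y x₀] at this
      linarith
    have hGη : η < G x₁ p := hball hx₁
    have key := hsub 0 t₁ x₁ y (p / (2 * D) + C) (2 * lam * (t₁ - t₀)) lam le_rfl (by linarith)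
      (by positivity) fun t ht x => by
        have h1 := hmax t ht x
        have h2 : p * dist x y ≤ p * D + p / (2 * D) * (dist x y ^ 2 - D ^ 2) := by
          have e : p * D + p / (2 * D) * (dist x y ^ 2 - D ^ 2) - p * dist x y
              = p / (2 * D) * (dist x y - D) ^ 2 := by field_simp; ring
          have : 0 ≤ p / (2 * D) * (dist x y - D) ^ 2 := by positivity
          linarith
        rw [← hD]
        linarith
    have e : 2 * (p / (2 * D) + C) * dist x₁ y = p + 2 * C * D := by
      rw [← hD]; field_simp
    rw [e] at key
    have := hmono x₁ p (p + 2 * C * D) hp (by linarith [mul_pos hC0 hd])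
    linarith [(abs_lt.1 hτ1).1]
  subst hxy
  refine ⟨t₁, by linarith, ht₁, ?_⟩
  have h1 := hmax t₀ ht₀0 x₀
  simp only [dist_self, sub_self] at h1
  linarith [mul_nonneg hlam0.le (sq_nonneg (t₁ - t₀))]

theorem le_of_quadSupersol {G : X → ℝ → ℝ} (hG0 : ∀ x, G x 0 ≤ 0) {v : ℝ → X → ℝ}
    (hsup : QuadSupersol G v)
    (hcont : ContinuousOn (fun z : ℝ × X => v z.1 z.2) (Set.Ici (0:ℝ) ×ˢ (Set.univ : Set X)))
    {a b m : ℝ} (hgrowth : ∀ t ≥ 0, ∀ x, -v t x ≤ a + b * t) (hm : ∀ x, m ≤ v 0 x)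
    {t : ℝ} (ht : 0 ≤ t) (x : X) : m ≤ v t x := by
  refine le_of_forall_pos_le_add fun δ hδ => ?_
  have : Nonempty X := ⟨x⟩
  set η := δ / (t ^ 2 + 1) with hη
  have hη0 : 0 < η := by positivity
  have hηt : η * (t ^ 2 + 1) = δ := by rw [hη]; field_simp
  obtain ⟨t₁, ht₁, x₁, hmax⟩ := exists_isMax_sub_sq (s := 0) (a := a) (b := b) (γ := η) 0
    (f := fun z : ℝ × X => -v z.1 z.2) hcont.neg hgrowth hη0
  simp only [sub_zero] at hmax
  have ht₁0 : t₁ = 0 := by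
    by_contra hne
    have hpos : 0 < t₁ := lt_of_le_of_ne ht₁ (Ne.symm hne)
    have key := hsup 0 t₁ x₁ x₁ 0 (-(2 * η * t₁)) (-η) le_rfl hpos le_rfl fun t ht x => by
      linarith [hmax t ht x]
    simp only [mul_zero, zero_mul] at key
    have : 0 < 2 * η * t₁ := by positivity
    linarith [hG0 x₁]
  subst ht₁0
  linarith [hmax t ht x, hm x₁]

theorem antitone_of_quadSubsol {G : X → ℝ → ℝ} (hG : Continuous fun w : X × ℝ => G w.1 w.2)
    (hmono : ∀ x p q, 0 ≤ p → p ≤ q → G x p ≤ G x q) {v : ℝ → X → ℝ} (hsub : QuadSubsol G v)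
    (hcont : ContinuousOn (fun z : ℝ × X => v z.1 z.2) (Set.Ici (0:ℝ) ×ˢ (Set.univ : Set X)))
    {a b M : ℝ} (hM : 0 ≤ M) (hlip : ∀ t ≥ 0, ∀ x y, v t x - v t y ≤ M * dist x y)
    (hgrowth : ∀ t ≥ 0, ∀ x, v t x ≤ a + b * t) {y : X} (hy : G y 0 = 0)
    {s t : ℝ} (hs : 0 ≤ s) (hst : s ≤ t) : v t y ≤ v s y := by
  refine le_of_forall_pos_le_add fun ε hε => ?_
  have : Nonempty X := ⟨y⟩
  set η := ε / ((t - s) + (t - s) ^ 2 + 1) with hη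
  have hts : 0 ≤ t - s := sub_nonneg.2 hst
  have hη0 : 0 < η := by positivity
  have hηt : η * ((t - s) + (t - s) ^ 2 + 1) = ε := by rw [hη]; field_simp
  have hcx : Continuous fun x => G x 0 := hG.comp (continuous_id.prodMk continuous_const)
  obtain ⟨δ, hδ, hball⟩ := Metric.mem_nhds_iff.1
    (hcx.continuousAt.eventually (lt_mem_nhds (show -η < G y 0 by linarith)))
  set C := (M + 1) / δ + M ^ 2 / η with hC
  have hC0 : 0 < C := by positivity
  have hCδ : M + 1 ≤ C * δ := by
    have : C * δ = M + 1 + M ^ 2 / η * δ := by rw [hC]; field_simp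
    have : 0 ≤ M ^ 2 / η * δ := by positivity
    linarith
  have hCη : M ^ 2 ≤ C * η := by
    have : C * η = (M + 1) / δ * η + M ^ 2 := by rw [hC]; field_simp
    have : 0 ≤ (M + 1) / δ * η := by positivity
    linarith
  obtain ⟨t₁, ht₁, x₁, hmax⟩ := exists_isMax_sub_sq (s := s) (a := a) (b := b) (γ := η) s
    (f := fun z : ℝ × X => v z.1 z.2 - (C * dist z.2 y ^ 2 + η * (z.1 - s)))
    ((hcont.mono (Set.prod_mono (Set.Ici_subset_Ici.2 hs) le_rfl)).sub (by fun_prop))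
    (fun t ht x => by
      have h1 := hgrowth t (hs.trans ht) x
      have h2 : 0 ≤ C * dist x y ^ 2 := by positivity
      have h3 : 0 ≤ η * (t - s) := mul_nonneg hη0.le (sub_nonneg.2 ht)
      simp only
      linarith) hη0
  simp only at hmax
  have hCd : C * dist x₁ y ≤ M := by
    rcases (dist_nonneg : 0 ≤ dist x₁ y).eq_or_lt with h | h
    · rw [← h]; linarith
    · have h1 := hmax t₁ ht₁ y
      simp only [dist_self] at h1
      have h2 := hlip t₁ (hs.trans ht₁) x₁ y
      exact le_of_mul_le_mul_right (by linarith) h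
  have hx₁ : -η < G x₁ 0 := by
    refine hball (Metric.mem_ball.2 ?_)
    by_contra! h
    have : C * δ ≤ C * dist x₁ y := by gcongr
    linarith
  have ht₁s : t₁ = s := by
    by_contra hne
    have hpos : s < t₁ := lt_of_le_of_ne ht₁ (Ne.symm hne)
    have key := hsub s t₁ x₁ y C (η + 2 * η * (t₁ - s)) η hs hpos hC0.le fun t ht x => by
      linarith [hmax t ht x]
    have h1 := hmono x₁ 0 (2 * C * dist x₁ y) le_rfl (by positivity)
    have : 0 < 2 * η * (t₁ - s) := mul_pos (by positivity) (sub_pos.2 hpos)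
    linarith
  subst ht₁s
  have h1 := hmax t hst y
  simp only [dist_self, sub_self] at h1
  have h2 := hlip t₁ hs x₁ y
  have h3 : M * dist x₁ y ≤ η := by
    have : M * (C * dist x₁ y) ≤ M * M := by gcongr
    exact le_of_mul_le_mul_left (by linarith) hC0
  have h4 : 0 ≤ C * dist x₁ y ^ 2 := by positivity
  linarith

theorem IsSubsolS.sub_le (hgeo : IsGeodesicSpace X) {G : X → ℝ → ℝ} {K : ℝ} (hK : 0 ≤ K)
    (hGK : ∀ x, 0 < G x K) {w : X → ℝ} (hw : Continuous w)
    (hsub : IsSubsolS (Set.univ : Set X) G (fun x => ((w x : ℝ) : EReal))) (x y : X) :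
    w x - w y ≤ K * dist x y := by
  obtain ⟨x₁, -, hmax⟩ := isCompact_univ.exists_isMaxOn ⟨x, Set.mem_univ x⟩
    (show ContinuousOn (fun z => w z - K * dist z y) Set.univ by fun_prop)
  have hmax' : ∀ z, w z - K * dist z y ≤ w x₁ - K * dist x₁ y := fun z => hmax (Set.mem_univ z)
  have hxy : x₁ = y := by
    by_contra hne
    have hd : 0 < dist x₁ y := dist_pos.2 hne
    have key := hsub.quad_touching hgeo hw (x₀ := x₁) (y := y) (α := K / (2 * dist x₁ y))
      (by positivity) fun z => by
        have e : K * dist x₁ y + K / (2 * dist x₁ y) * (dist z y ^ 2 - dist x₁ y ^ 2)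
            - K * dist z y = K / (2 * dist x₁ y) * (dist z y - dist x₁ y) ^ 2 := by
          field_simp; ring
        have : 0 ≤ K / (2 * dist x₁ y) * (dist z y - dist x₁ y) ^ 2 := by positivity
        linarith [hmax' z]
    rw [show 2 * (K / (2 * dist x₁ y)) * dist x₁ y = K by field_simp] at key
    exact key.not_gt (hGK x₁)
  subst hxy
  have := hmax' x
  rw [dist_self] at this
  linarith

/-- The descent constant of stationary subsolutions is uniform over all subsolutions. -/
theorem exists_descent_const_isSubsolS (hgeo : IsGeodesicSpace X) {G : X → ℝ → ℝ}
    (hG : Continuous fun w : X × ℝ => G w.1 w.2)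
    (hmono : ∀ x p q, 0 ≤ p → p ≤ q → G x p ≤ G x q)
    {K : ℝ} (hK : 0 ≤ K) (hGK : ∀ x, 0 < G x K) {x₀ : X} {p : ℝ} (hp : 0 ≤ p)
    (hpos : 0 < G x₀ p) :
    ∃ C : ℝ, ∀ w : X → ℝ, Continuous w →
      IsSubsolS (Set.univ : Set X) G (fun x => ((w x : ℝ) : EReal)) →
      ∀ y, w x₀ - w y ≤ p * dist x₀ y + C * dist x₀ y ^ 2 := by
  obtain ⟨C, hC⟩ := exists_descent_const hG hmono hK hp hpos
  refine ⟨C, fun w hw hsub y => ?_⟩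
  obtain ⟨B, hB⟩ := isCompact_univ.exists_bound_of_continuousOn hw.continuousOn
  obtain ⟨ρ, hρ⟩ := hC (fun _ => w) (hsub.quadSubsol hgeo hw)
    (hw.comp continuous_snd).continuousOn (fun _ _ x y => hsub.sub_le hgeo hK hGK hw x y) B
    fun _ _ x => hB x (Set.mem_univ x)
  obtain ⟨_, _, _, h⟩ := hρ (ρ + 1) (by linarith) y
  exact h

theorem exists_forall_ge_le {G : X → ℝ → ℝ} (hgeo : IsGeodesicSpace X)
    (hG : Continuous fun w : X × ℝ => G w.1 w.2) (hG0 : ∀ x, G x 0 ≤ 0)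
    (hconv : ∀ x θ p, 0 ≤ θ → θ ≤ 1 → G x (θ * p) ≤ θ * G x p + (1 - θ) * G x 0)
    (hA : ∃ a, G a 0 = 0) {v : ℝ → X → ℝ} (hsup : QuadSupersol G v)
    (hcont : ContinuousOn (fun z : ℝ × X => v z.1 z.2) (Set.Ici (0:ℝ) ×ˢ (Set.univ : Set X)))
    {M B K : ℝ} (hM : 0 ≤ M) (hlip : ∀ t ≥ 0, ∀ x y, v t x - v t y ≤ M * dist x y)
    (hB : ∀ t ≥ 0, ∀ x, |v t x| ≤ B) {φ : X → ℝ} (hK : 0 ≤ K)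
    (hφlip : ∀ x y, φ x - φ y ≤ K * dist x y) (hφ : Continuous φ) (hQ : DescentBound G φ)
    (hφA : ∀ t ≥ 0, ∀ a, G a 0 = 0 → φ a ≤ v t a) {δ : ℝ} (hδ : 0 < δ) :
    ∃ T, ∀ t ≥ T, ∀ x, φ x - δ ≤ v t x := by
  obtain ⟨a₀, ha₀⟩ := hA
  have : Nonempty X := ⟨a₀⟩
  have hB0 : 0 ≤ B := (abs_nonneg _).trans (hB 0 le_rfl a₀)
  obtain ⟨N, hN⟩ := isCompact_univ.exists_bound_of_continuousOn hφ.continuousOn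
  replace hN : ∀ x, |φ x| ≤ N := fun x => hN x (Set.mem_univ x)
  have hN0 : 0 ≤ N := (abs_nonneg _).trans (hN a₀)
  -- the scaling factor
  obtain ⟨σ, hσ0, hσ1, hσN⟩ : ∃ σ : ℝ, 0 < σ ∧ σ < 1 ∧ σ * (2 * N) ≤ δ / 2 := by
    refine ⟨min (1 / 2) (δ / (2 * (2 * N + 1))), by positivity,
      (min_le_left _ _).trans_lt (by norm_num), ?_⟩
    calc min (1 / 2) (δ / (2 * (2 * N + 1))) * (2 * N)
        ≤ δ / (2 * (2 * N + 1)) * (2 * N + 1) := by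
          gcongr
          · exact min_le_right _ _
          · linarith
      _ = δ / 2 := by field_simp
  -- the size of the neighbourhood of the zero set of `G(·,0)`
  obtain ⟨d₀, hd₀, hd₀le⟩ : ∃ d₀ : ℝ, 0 < d₀ ∧ (K + 2 * M) * d₀ ≤ δ / 2 := by
    refine ⟨δ / (2 * (K + 2 * M + 1)), by positivity, ?_⟩
    calc (K + 2 * M) * (δ / (2 * (K + 2 * M + 1)))
        ≤ (K + 2 * M + 1) * (δ / (2 * (K + 2 * M + 1))) :=
          mul_le_mul_of_nonneg_right (by linarith) (by positivity)
      _ = δ / 2 := by field_simp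
  obtain ⟨κ, hκ0, hκ⟩ : ∃ κ : ℝ, 0 < κ ∧ ∀ x, -κ < G x 0 → ∃ a, G a 0 = 0 ∧ dist x a < d₀ := by
    by_contra! hcon
    have hcx : Continuous fun x => G x 0 := hG.comp (continuous_id.prodMk continuous_const)
    have hclosed : IsClosed {x : X | ∀ a, G a 0 = 0 → d₀ ≤ dist x a} := by
      simp only [Set.ofPred_forall]
      exact isClosed_iInter fun a => isClosed_iInter fun _ =>
        isClosed_le continuous_const (by fun_prop)
    obtain ⟨x', -, hx'⟩ := hcon 1 one_pos
    obtain ⟨z, hz, hzmax⟩ := hclosed.isCompact.exists_isMaxOn ⟨x', hx'⟩ hcx.continuousOn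
    have hzneg : G z 0 < 0 := lt_of_le_of_ne (hG0 z) fun h => by
      have := hz z h
      rw [dist_self] at this
      linarith
    obtain ⟨x, hx1, hx2⟩ := hcon (-G z 0) (neg_pos.2 hzneg)
    have : G x 0 ≤ G z 0 := hzmax hx2
    linarith
  set η := σ * κ / 2 with hη
  have hη0 : 0 < η := by positivity
  have huc : UniformContinuousOn (fun w : X × ℝ => G w.1 w.2)
      ((Set.univ : Set X) ×ˢ Set.Icc 0 (2 * K)) :=
    (isCompact_univ.prod isCompact_Icc).uniformContinuousOn_of_continuous hG.continuousOn
  obtain ⟨d₁, hd₁, huc⟩ := Metric.uniformContinuousOn_iff.1 huc η hη0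
  set E := (K + 1) / min d₀ d₁ with hE
  have hmin : 0 < min d₀ d₁ := lt_min hd₀ hd₁
  have hE0 : 0 < E := by positivity
  have hEd : E * min d₀ d₁ = K + 1 := by rw [hE]; field_simp
  set lam := η ^ 2 / (8 * B + 1) / 2 with hlam
  have hlam0 : 0 < lam := by positivity
  have hlamB : 4 * lam * (2 * B) < η ^ 2 := by
    have : lam * 2 * (8 * B + 1) = η ^ 2 := by rw [hlam]; field_simp
    nlinarith
  refine ⟨1 + 2 * B / lam, fun t₀ ht₀ x₀ => ?_⟩
  have ht₀0 : 0 ≤ t₀ := by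
    have : 0 ≤ 2 * B / lam := by positivity
    linarith
  obtain ⟨t₁, ht₁, ⟨x₁, y₁⟩, hmax⟩ := exists_isMax_sub_sq (Y := X × X) (s := 0) (a := N + B)
    (b := 0) (γ := lam) t₀
    (f := fun z : ℝ × (X × X) =>
      (1 - σ) * φ z.2.1 - E * dist z.2.1 z.2.2 ^ 2 - v z.1 z.2.2)
    (ContinuousOn.sub (by fun_prop) (hcont.comp
      (f := fun z : ℝ × (X × X) => (z.1, z.2.2)) (by fun_prop) fun z hz => ⟨hz.1, trivial⟩))
    (fun t ht z => by
      have h1 := (abs_le.1 (hB t ht z.2)).1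
      have h2 : (1 - σ) * φ z.1 ≤ (1 - σ) * N :=
        mul_le_mul_of_nonneg_left (abs_le.1 (hN z.1)).2 (by linarith)
      have h4 : 0 ≤ σ * N := by positivity
      have h3 : 0 ≤ E * dist z.1 z.2 ^ 2 := by positivity
      simp only
      linarith) hlam0
  simp only [Prod.forall] at hmax
  set D := dist x₁ y₁ with hD
  have hD0 : 0 ≤ D := dist_nonneg
  have hτ : lam * (t₁ - t₀) ^ 2 ≤ 2 * B := by
    have h1 := hmax t₀ ht₀0 x₁ y₁
    have h2 := (abs_le.1 (hB t₀ ht₀0 y₁)).2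
    have h3 := (abs_le.1 (hB t₁ ht₁ y₁)).1
    simp only [sub_self] at h1
    linarith
  have hτ1 := abs_lt.1 (abs_two_mul_lt hlam0 hη0 hτ hlamB)
  have hτ2 := abs_lt.1 (abs_lt_of_mul_sq_le hlam0 (by positivity) hτ)
  have hED : E * D ≤ K := by
    rcases hD0.eq_or_lt with h | h
    · rw [← h]; linarith
    · have h1 := hmax t₁ ht₁ y₁ y₁
      simp only [dist_self] at h1
      have h2 : (1 - σ) * (φ x₁ - φ y₁) ≤ (1 - σ) * (K * D) :=
        mul_le_mul_of_nonneg_left (hφlip x₁ y₁) (by linarith)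
      have h3 : 0 ≤ σ * (K * D) := by positivity
      exact le_of_mul_le_mul_right (by linarith) h
  have hDmin : D < min d₀ d₁ := by
    by_contra! h
    have : E * min d₀ d₁ ≤ E * D := by gcongr
    linarith
  have hsuper : -η < G y₁ (2 * E * D) := by
    have key := hsup 0 t₁ y₁ x₁ E (-(2 * lam * (t₁ - t₀))) (-lam) le_rfl (by linarith) hE0.le
      fun t ht y => by
        have := hmax t ht x₁ y
        rw [dist_comm x₁ y] at this
        rw [dist_comm y₁ x₁, ← hD]
        linarith
    rw [dist_comm y₁ x₁, ← hD] at key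
    linarith
  have hsubx : G x₁ (2 * E * D) ≤ σ * G x₁ 0 := by
    have := hQ.le_of_isMax hgeo hG hG0 hconv (θ := 1 - σ) (E := E) (x₁ := x₁) (y₁ := y₁)
      (by linarith) (by linarith) hE0.le fun x => by
        have := hmax t₁ ht₁ x y₁
        rw [← hD]
        linarith
    simpa using this
  have hnear : -κ < G x₁ 0 := by
    by_contra! h
    have hp : 2 * E * D ∈ Set.Icc 0 (2 * K) := ⟨by positivity, by linarith⟩
    have h1 := huc (x₁, 2 * E * D) ⟨trivial, hp⟩ (y₁, 2 * E * D) ⟨trivial, hp⟩ (by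
      rw [dist_prod_same_right]
      exact hDmin.trans_le (min_le_right _ _))
    rw [Real.dist_eq] at h1
    have h2 := (abs_lt.1 h1).1
    have h3 : σ * G x₁ 0 ≤ σ * -κ := by gcongr
    simp only at h2
    linarith
  obtain ⟨a, ha, hxa⟩ := hκ x₁ hnear
  have h1 := hmax t₀ ht₀0 x₀ x₀
  simp only [dist_self, sub_self] at h1
  have h2 := hlip t₁ ht₁ a y₁
  have h3 : dist a y₁ ≤ 2 * d₀ := by
    have := dist_triangle a x₁ y₁
    rw [dist_comm a x₁] at this
    linarith [min_le_left d₀ d₁]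
  have h4 : M * dist a y₁ ≤ M * (2 * d₀) := by gcongr
  have h5 := hφlip x₁ a
  have h6 : K * dist x₁ a ≤ K * d₀ := by gcongr
  have h7 := hφA t₁ ht₁ a ha
  have h8 : σ * (φ x₀ - φ x₁) ≤ σ * (2 * N) := by
    gcongr
    linarith [(abs_le.1 (hN x₀)).2, (abs_le.1 (hN x₁)).1]
  have h9 : 0 ≤ E * D ^ 2 := by positivity
  have h10 : 0 ≤ lam * (t₁ - t₀) ^ 2 := by positivity
  linarith

theorem limsup_le_limsup_add {f g : ℝ → ℝ} {B D : ℝ} (hf : ∀ t ≥ 0, |f t| ≤ B)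
    (hg : ∀ t ≥ 0, |g t| ≤ B) {ρ : ℝ} (h : ∀ t₀ > ρ, ∃ t₁ ≥ t₀ - ρ, f t₀ - g t₁ ≤ D) :
    Filter.limsup f atTop ≤ Filter.limsup g atTop + D := by
  have hgb : Filter.IsBoundedUnder (· ≤ ·) atTop g := ⟨B, Filter.eventually_map.2
    ((eventually_ge_atTop 0).mono fun t ht => (abs_le.1 (hg t ht)).2)⟩
  have hfb : Filter.IsBoundedUnder (· ≥ ·) atTop f := ⟨-B, Filter.eventually_map.2
    ((eventually_ge_atTop 0).mono fun t ht => (abs_le.1 (hf t ht)).1)⟩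
  refine le_of_forall_pos_le_add fun ε hε => ?_
  obtain ⟨T, hT⟩ := eventually_atTop.1
    (Filter.eventually_lt_of_limsup_lt (lt_add_of_pos_right (Filter.limsup g atTop) hε) hgb)
  refine Filter.limsup_le_of_le hfb.isCoboundedUnder_le ?_
  filter_upwards [eventually_gt_atTop ρ, eventually_ge_atTop (T + ρ)] with t ht1 ht2
  obtain ⟨t₁, ht₁, hle⟩ := h t ht1
  linarith [hT t₁ (by linarith)]

theorem bddAbove_subsolValues (hgeo : IsGeodesicSpace X) {G : X → ℝ → ℝ} {K : ℝ} (hK : 0 ≤ K)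
    (hGK : ∀ x, 0 < G x K) (x y : X) : BddAbove (subsolValues G x y) := by
  refine ⟨K * dist x y, ?_⟩
  rintro _ ⟨w, hw, hsub, hy, rfl⟩
  have := hsub.sub_le hgeo hK hGK hw x y
  linarith

theorem sub_le_sSup_subsolValues (hgeo : IsGeodesicSpace X) {G : X → ℝ → ℝ}
    (hG : Continuous fun w : X × ℝ => G w.1 w.2) (hG0 : ∀ x, G x 0 ≤ 0) {K : ℝ} (hK : 0 ≤ K)
    (hGK : ∀ x, 0 < G x K) {w : X → ℝ} (hw : Continuous w) (hQ : DescentBound G w) (x y : X) :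
    w x - w y ≤ sSup (subsolValues G x y) := by
  refine le_csSup (bddAbove_subsolValues hgeo hK hGK x y)
    ⟨fun z => w z - w y, by fun_prop, ?_, sub_self _, rfl⟩
  refine DescentBound.isSubsolS hG hG0 (by fun_prop) fun z p hp hpos => ?_
  obtain ⟨C, hC⟩ := hQ z p hp hpos
  exact ⟨C, fun z' => by linarith [hC z']⟩

theorem sSup_subsolValues_sub_le (hgeo : IsGeodesicSpace X) {G : X → ℝ → ℝ}
    (hG : Continuous fun w : X × ℝ => G w.1 w.2) (hG0 : ∀ x, G x 0 ≤ 0) {K : ℝ} (hK : 0 ≤ K)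
    (hGK : ∀ x, 0 < G x K) {x z : X} {D : ℝ}
    (hD : ∀ w : X → ℝ, Continuous w →
      IsSubsolS (Set.univ : Set X) G (fun x => ((w x : ℝ) : EReal)) → w x - w z ≤ D) (y : X) :
    sSup (subsolValues G x y) ≤ sSup (subsolValues G z y) + D := by
  refine csSup_le (nonempty_subsolValues hG hG0 x y) ?_
  rintro _ ⟨w, hw, hsub, hy, rfl⟩
  have := le_csSup (bddAbove_subsolValues hgeo hK hGK z y) ⟨w, hw, hsub, hy, rfl⟩
  linarith [hD w hw hsub]

/-- The large time limit of a bounded Lipschitz solution of `∂ₜv + G(x,|Dv|) = 0`, when the maximum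
of `G(·,0)` is zero. -/
theorem tendsto_profile (hgeo : IsGeodesicSpace X) {G : X → ℝ → ℝ}
    (hG : Continuous fun w : X × ℝ => G w.1 w.2) (hG0 : ∀ x, G x 0 ≤ 0)
    (hmono : ∀ x p q, 0 ≤ p → p ≤ q → G x p ≤ G x q)
    (hconv : ∀ x θ p, 0 ≤ θ → θ ≤ 1 → G x (θ * p) ≤ θ * G x p + (1 - θ) * G x 0)
    {K : ℝ} (hK : 0 ≤ K) (hGK : ∀ x, 0 < G x K) (hA : ∃ a, G a 0 = 0)
    {v : ℝ → X → ℝ} (hsub : QuadSubsol G v) (hsup : QuadSupersol G v)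
    (hcont : ContinuousOn (fun z : ℝ × X => v z.1 z.2) (Set.Ici (0:ℝ) ×ˢ (Set.univ : Set X)))
    {M B : ℝ} (hM : 0 ≤ M) (hlip : ∀ t ≥ 0, ∀ x y, v t x - v t y ≤ M * dist x y)
    (hB : ∀ t ≥ 0, ∀ x, |v t x| ≤ B) {φm φ : X → ℝ}
    (hφm : ∀ x, φm x = sInf {r : ℝ | ∃ t : ℝ, 0 ≤ t ∧ r = v t x})
    (hφ : ∀ x, φ x = sInf {r : ℝ | ∃ y : X, G y 0 = 0 ∧ r = sSup (subsolValues G x y) + φm y})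
    (x : X) : Tendsto (fun t => v t x) atTop (𝓝 (φ x)) := by
  have hφmle : ∀ t ≥ 0, ∀ y, φm y ≤ v t y := fun t ht y => by
    rw [hφm]
    refine csInf_le ⟨-B, ?_⟩ ⟨t, ht, rfl⟩
    rintro _ ⟨s, hs, rfl⟩
    exact (abs_le.1 (hB s hs y)).1
  have hφmge : ∀ y, -B ≤ φm y := fun y => by
    rw [hφm]
    refine le_csInf ⟨_, 0, le_rfl, rfl⟩ ?_
    rintro _ ⟨s, hs, rfl⟩
    exact (abs_le.1 (hB s hs y)).1
  have hSlip : ∀ x z y, sSup (subsolValues G x y) ≤ sSup (subsolValues G z y) + K * dist x z :=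
    fun x z y => sSup_subsolValues_sub_le hgeo hG hG0 hK hGK
      (fun w hw hs => hs.sub_le hgeo hK hGK hw x z) y
  have hSnonneg : ∀ x y, 0 ≤ sSup (subsolValues G x y) := fun x y => by
    have h0 : DescentBound G fun _ : X => (0:ℝ) := fun z p hp _ => ⟨0, fun z' => by
      have : 0 ≤ p * dist z z' := by positivity
      linarith⟩
    simpa using sub_le_sSup_subsolValues hgeo hG hG0 hK hGK continuous_const h0 x y
  have hφle : ∀ x y, G y 0 = 0 → φ x ≤ sSup (subsolValues G x y) + φm y := fun x y hy => by
    rw [hφ]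
    refine csInf_le ⟨-B, ?_⟩ ⟨y, hy, rfl⟩
    rintro _ ⟨y', -, rfl⟩
    linarith [hφmge y', hSnonneg x y']
  have hleφ : ∀ x b, (∀ y, G y 0 = 0 → b ≤ sSup (subsolValues G x y) + φm y) → b ≤ φ x := by
    intro x b hb
    rw [hφ]
    obtain ⟨a, ha⟩ := hA
    refine le_csInf ⟨_, a, ha, rfl⟩ ?_
    rintro _ ⟨y, hy, rfl⟩
    exact hb y hy
  have hφlip : ∀ x y, φ x - φ y ≤ K * dist x y := fun x y => by
    have := hleφ y (φ x - K * dist x y) fun z hz => by linarith [hφle x z hz, hSlip x y z]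
    linarith
  have hφQ : DescentBound G φ := fun x p hp hpos => by
    obtain ⟨C, hC⟩ := exists_descent_const_isSubsolS hgeo hG hmono hK hGK hp hpos
    refine ⟨C, fun y => ?_⟩
    have := hleφ y (φ x - (p * dist x y + C * dist x y ^ 2)) fun z hz => by
      linarith [hφle x z hz, sSup_subsolValues_sub_le hgeo hG hG0 hK hGK
        (fun w hw hs => hC w hw hs y) z]
    linarith
  have hφA : ∀ t ≥ 0, ∀ a, G a 0 = 0 → φ a ≤ v t a := fun t ht a ha => by
    linarith [hφle a a ha, hφmle t ht a, sSup_subsolValues_self hG hG0 a]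
  set vbar : X → ℝ := fun y => limsup (fun t => v t y) atTop with hvbar
  have hvlip : ∀ x y, vbar x - vbar y ≤ M * dist x y := fun x y => by
    have := limsup_le_limsup_add (f := fun t => v t x) (g := fun t => v t y)
      (D := M * dist x y) (ρ := 0) (fun t ht => hB t ht x) (fun t ht => hB t ht y)
      fun t ht => ⟨t, by simp, hlip t (le_of_lt ht) x y⟩
    linarith
  have hvQ : DescentBound G vbar := fun x p hp hpos => by
    obtain ⟨C, hC⟩ := exists_descent_const hG hmono hM hp hpos
    obtain ⟨ρ, hρ⟩ := hC v hsub hcont hlip B hB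
    refine ⟨C, fun y => ?_⟩
    have := limsup_le_limsup_add (f := fun t => v t x) (g := fun t => v t y)
      (D := p * dist x y + C * dist x y ^ 2) (ρ := ρ) (fun t ht => hB t ht x)
      (fun t ht => hB t ht y) fun t ht => by
        obtain ⟨t₁, h1, -, h2⟩ := hρ t ht y
        exact ⟨t₁, h1, h2⟩
    linarith
  have hbdd : ∀ y, IsBoundedUnder (· ≤ ·) atTop fun t => v t y := fun y =>
    ⟨B, eventually_map.2 ((eventually_ge_atTop 0).mono fun t ht => (abs_le.1 (hB t ht y)).2)⟩
  have hbdd' : ∀ y, IsBoundedUnder (· ≥ ·) atTop fun t => v t y := fun y =>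
    ⟨-B, eventually_map.2 ((eventually_ge_atTop 0).mono fun t ht => (abs_le.1 (hB t ht y)).1)⟩
  have hvA : ∀ a, G a 0 = 0 → vbar a ≤ φm a := fun a ha => by
    rw [hφm]
    refine le_csInf ⟨_, 0, le_rfl, rfl⟩ ?_
    rintro _ ⟨s, hs, rfl⟩
    refine limsup_le_of_le (hbdd' a).isCoboundedUnder_le ?_
    filter_upwards [eventually_ge_atTop s] with t ht
    exact antitone_of_quadSubsol (a := B) (b := 0) hG hmono hsub hcont hM hlip
      (fun t ht x => by linarith [(abs_le.1 (hB t ht x)).2]) ha hs ht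
  have hvφ : vbar x ≤ φ x := hleφ x _ fun y hy => by
    linarith [hvA y hy, sub_le_sSup_subsolValues hgeo hG hG0 hK hGK
      (continuous_of_sub_le hvlip) hvQ x y]
  refine tendsto_order.2 ⟨fun b hb => ?_, fun b hb => ?_⟩
  · obtain ⟨T, hT⟩ := exists_forall_ge_le hgeo hG hG0 hconv hA hsup hcont hM hlip hB hK hφlip
      (continuous_of_sub_le hφlip) hφQ hφA (half_pos (sub_pos.2 hb))
    filter_upwards [eventually_ge_atTop T] with t ht
    linarith [hT t ht x]
  · exact eventually_lt_of_limsup_lt (hvφ.trans_lt hb) (hbdd x)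

end Abstract

/-- asymptotic profile. -/
theorem stmt19 [CompactSpace X] [Nonempty X] (hgeo : IsGeodesicSpace X)
    (H : X → ℝ → ℝ)
    (heven : ∀ x p, H x p = H x |p|)
    (hA1 : Continuous fun w : X × ℝ => H w.1 w.2)
    (hA2 : ∀ x, ConvexOn ℝ Set.univ (H x))
    (hA3 : ∀ M : ℝ, ∃ p₀ : ℝ, ∀ p ≥ p₀, ∀ x, M ≤ H x p)
    (hA4 : BddAbove (Set.range fun x => H x 0))
    (c : ℝ) (hc : IsGreatest (Set.range fun x => H x 0) c)
    (hA : {x : X | H x 0 = c}.Nonempty)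
    (u₀ : X → ℝ) (L₀ : NNReal) (hu₀ : LipschitzWith L₀ u₀)
    (u : ℝ × X → ℝ)
    (hucont : ContinuousOn u (Set.Ici (0:ℝ) ×ˢ (Set.univ : Set X)))
    (hulip : ∃ M : ℝ, ∀ z ∈ Set.Ici (0:ℝ) ×ˢ (Set.univ : Set X),
      ∀ w ∈ Set.Ici (0:ℝ) ×ˢ (Set.univ : Set X), |u z - u w| ≤ M * dist z w)
    (hini : ∀ x : X, u (0, x) = u₀ x)
    (husol : IsSol (Set.Ioi (0:ℝ) ×ˢ (Set.univ : Set X)) (fun z p q => q + H z.2 p)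
      (fun z => ((u z : ℝ) : EReal)))
    (φm : X → ℝ)
    (hφm : ∀ x : X, φm x = sInf {r : ℝ | ∃ t : ℝ, 0 ≤ t ∧ r = u (t, x) + c * t})
    (S : X → X → ℝ)
    (hS : ∀ x y : X, S x y = sSup {r : ℝ | ∃ w : X → ℝ, Continuous w ∧
      IsSubsolS (Set.univ : Set X) (fun x' p => H x' p - c) (fun x' => ((w x' : ℝ) : EReal)) ∧
      w y = 0 ∧ r = w x})
    (φinf : X → ℝ)
    (hφinf : ∀ x : X, φinf x = sInf {r : ℝ | ∃ y : X, H y 0 = c ∧ r = S x y + φm y}) :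
    ∀ x : X, Filter.Tendsto (fun t : ℝ => u (t, x) + c * t) Filter.atTop (𝓝 (φinf x)) := by
  have hG : Continuous fun w : X × ℝ => H w.1 w.2 - c := hA1.sub continuous_const
  have hG0 : ∀ x, H x 0 - c ≤ 0 := fun x => sub_nonpos.2 (hc.2 ⟨x, rfl⟩)
  have hmono : ∀ x p q, 0 ≤ p → p ≤ q → H x p - c ≤ H x q - c := by
    intro x p q hp hpq
    have h := (hA2 x).le_max_of_mem_Icc (Set.mem_univ (-q)) (Set.mem_univ q)
      (show p ∈ Set.Icc (-q) q from ⟨by linarith, hpq⟩)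
    rw [heven x (-q), abs_neg, ← heven x q, max_self] at h
    linarith
  have hconv : ∀ x θ p, 0 ≤ θ → θ ≤ 1 →
      H x (θ * p) - c ≤ θ * (H x p - c) + (1 - θ) * (H x 0 - c) := by
    intro x θ p h0 h1
    have h := (hA2 x).2 (Set.mem_univ p) (Set.mem_univ 0) h0 (sub_nonneg.2 h1) (by ring)
    simp only [smul_eq_mul, mul_zero, add_zero] at h
    linarith
  obtain ⟨p₀, hp₀⟩ := hA3 (c + 1)
  have hGK : ∀ x, 0 < H x (max p₀ 0) - c := fun x => by
    linarith [hp₀ (max p₀ 0) (le_max_left _ _) x]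
  obtain ⟨a, ha⟩ := hA
  have ha : H a 0 - c = 0 := sub_eq_zero.2 ha
  obtain ⟨M', hM'⟩ := hulip
  have hM : 0 ≤ |M'| := abs_nonneg _
  have hulip : ∀ s t : ℝ, 0 ≤ s → 0 ≤ t → ∀ x y,
      |u (s, x) - u (t, y)| ≤ |M'| * dist (s, x) (t, y) := fun s t hs ht x y =>
    (hM' (s, x) ⟨hs, trivial⟩ (t, y) ⟨ht, trivial⟩).trans
      (mul_le_mul_of_nonneg_right (le_abs_self _) dist_nonneg)
  set v : ℝ → X → ℝ := fun t x => u (t, x) + c * t with hv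
  have hlip : ∀ t ≥ 0, ∀ x y, v t x - v t y ≤ |M'| * dist x y := fun t ht x y => by
    have h := (abs_le.1 (hulip t t ht ht x y)).2
    rw [dist_prod_same_left] at h
    simp only [hv]
    linarith
  have hcont : ContinuousOn (fun z : ℝ × X => v z.1 z.2)
      (Set.Ici (0:ℝ) ×ˢ (Set.univ : Set X)) :=
    hucont.add (by fun_prop)
  have hucont' : ContinuousOn u (Set.Ioi (0:ℝ) ×ˢ (Set.univ : Set X)) :=
    hucont.mono (Set.prod_mono Set.Ioi_subset_Ici_self le_rfl)
  have hsub := husol.1.quadSubsol hgeo c hucont'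
  have hsup := husol.2.quadSupersol hgeo c hucont'
  obtain ⟨B₀, hB₀⟩ := isCompact_univ.exists_bound_of_continuousOn hu₀.continuous.continuousOn
  have hB₀ : ∀ x, |u₀ x| ≤ B₀ := fun x => hB₀ x (Set.mem_univ x)
  have hgrowth : ∀ t ≥ 0, ∀ x, |v t x| ≤ B₀ + (|M'| + |c|) * t := fun t ht x => by
    have h1 := hulip t 0 ht le_rfl x x
    rw [dist_prod_same_right, hini, Real.dist_eq, sub_zero, abs_of_nonneg ht] at h1
    have h2 := abs_add_three (u (t, x) - u₀ x) (u₀ x) (c * t)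
    rw [abs_mul, abs_of_nonneg ht, sub_add_cancel] at h2
    linarith [hB₀ x]
  have hlower : ∀ t ≥ 0, ∀ x, -B₀ ≤ v t x := fun t ht x =>
    le_of_quadSupersol hG0 hsup hcont
      (fun t ht x => (neg_le_abs _).trans (hgrowth t ht x))
      (fun x => by simpa [hv, hini] using (abs_le.1 (hB₀ x)).1) ht x
  obtain ⟨R, hR⟩ := isCompact_univ.exists_bound_of_continuousOn
    (show ContinuousOn (fun x : X => dist x a) Set.univ by fun_prop)
  have hupper : ∀ t ≥ 0, ∀ x, v t x ≤ B₀ + |M'| * R := fun t ht x => by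
    have h1 : v t a ≤ v 0 a := antitone_of_quadSubsol hG hmono hsub hcont hM hlip
      (fun t ht x => (le_abs_self _).trans (hgrowth t ht x)) ha le_rfl ht
    have h2 : v 0 a ≤ B₀ := by simpa [hv, hini] using (abs_le.1 (hB₀ a)).2
    have h3 := mul_le_mul_of_nonneg_left ((le_abs_self _).trans (hR x (Set.mem_univ x))) hM
    linarith [hlip t ht x a]
  have hR0 : 0 ≤ |M'| * R := mul_nonneg hM ((norm_nonneg _).trans (hR a (Set.mem_univ a)))
  refine tendsto_profile hgeo hG hG0 hmono hconv (le_max_right p₀ 0) hGK ⟨a, ha⟩ hsub hsup hcont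
    hM hlip (fun t ht x => abs_le.2 ⟨?_, hupper t ht x⟩) hφm fun x => ?_
  · linarith [hlower t ht x]
  · rw [hφinf]
    simp only [hS, sub_eq_zero, subsolValues]
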